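/- Let g ≥ 3 be odd. Enumerate the 2g−1 coordinates z = (x(0), …, x(g−1), y(0), …, y(g−2)) and, for z ∈ (0, ∞)^{2g−1}, let M(z) = M_g(x, ŷ) where ŷ : Fin g → ℝ agrees with y on the first g−1 coordinates and has ŷ(g−1) = 1; for each j ∈ Fin(2g−1), let A_j be the constant matrix equal to the partial derivative of M(z) with respect to the j-th coordinate. Define f(z) = ∑_{σ ∈ Perm(Fin(2g−1))} sign(σ) · trace((M(z)⁻¹A_{σ(1)}) ⋯ (M(z)⁻¹A_{σ(2g−1)})). Then f is Lebesgue integrable on (0, ∞)^{2g−1} and |∫_{(0,∞)^{2g−1}} f| = g · binomial(2g, g) · ζ(g), where ζ(g) = ∑_{n ≥ 1} n^{−g}. (The canonical integral of ω^{2g−1} over the cell of the wheel W_g equals g · binomial(2g, g) · ζ(g), up to orientation sign.) -/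

import Mathlib

open MeasureTheory

/-- The value `φⁿ_X(V₁, …, V_n) = ∑_σ sign(σ)·tr((X⁻¹V_{σ(1)})⋯(X⁻¹V_{σ(n)}))`
of the bi-invariant form `ωⁿ_X = tr((X⁻¹ dX)ⁿ)` at `X` on tangent vectors
`V₁, …, V_n` (factorial-free convention). -/
noncomputable def phiForm {m : ℕ} (n : ℕ) (X : Matrix (Fin m) (Fin m) ℝ)
    (Vs : Fin n → Matrix (Fin m) (Fin m) ℝ) : ℝ :=
  ∑ σ : Equiv.Perm (Fin n),
    ((Equiv.Perm.sign σ : ℤ) : ℝ) *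
      (List.ofFn (fun i => X⁻¹ * Vs (σ i))).prod.trace

/-- Cyclic successor on `Fin g`. -/
def cyc {g : ℕ} (i : Fin g) : Fin g := ⟨((i : ℕ) + 1) % g, Nat.mod_lt _ i.pos⟩

/-- The wheel Laplacian `M_g(x, y)`: the Gram matrix of the triangle cycle
basis `cᵢ = spokeᵢ − spokeᵢ₊₁ + rimᵢ` of the wheel graph with `g` spokes `x`
and `g` rim edges `y` (indices cyclic modulo `g`). -/
noncomputable def wheelLap (g : ℕ) (x y : Fin g → ℝ) :
    Matrix (Fin g) (Fin g) ℝ :=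
  Matrix.of fun i j =>
    if i = j then x i + x (cyc i) + y i
    else if j = cyc i then -x (cyc i)
    else if i = cyc j then -x (cyc j)
    else 0

/-- Extension of `y : Fin (g−1) → ℝ` to `Fin g → ℝ` with last coordinate `1`. -/
noncomputable def extendOne (g : ℕ) (y : Fin (g - 1) → ℝ) : Fin g → ℝ :=
  fun i => if h : (i : ℕ) < g - 1 then y ⟨i, h⟩ else 1

/-- The constant matrix `A_j`: the partial derivative of
`z ↦ M_g(x, ŷ)` with respect to the `j`-th coordinate of
`z = (x 0, …, x (g−1), y 0, …, y (g−2))`. -/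
noncomputable def wheelDeriv (g : ℕ) (j : Fin (2 * g - 1)) :
    Matrix (Fin g) (Fin g) ℝ :=
  if h : (j : ℕ) < g then
    wheelLap g (fun i => if i = (⟨j, h⟩ : Fin g) then 1 else 0) 0
  else
    wheelLap g 0 (fun i => if (i : ℕ) = (j : ℕ) - g then 1 else 0)

/-- The canonical integrand of the wheel `W_g` in the affine chart where the
last rim edge has length `1`: the pullback of `ω^{2g−1} = tr((M⁻¹ dM)^{2g−1})`. -/
noncomputable def wheelCanonicalIntegrand (g : ℕ)
    (p : (Fin g → ℝ) × (Fin (g - 1) → ℝ)) : ℝ :=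
  phiForm (2 * g - 1) (wheelLap g p.1 (extendOne g p.2)) (wheelDeriv g)

/-!
The form `ω^{2g−1}` is invariant under rescaling the matrix and under adding multiples of the
matrix to the tangent vectors, and the wheel Laplacian is, up to the length of the last rim edge,
a sum `∑ κ_j u_j u_jᵀ` with `u_j = w_j e_{j−1} − e_j`, `w_j = e^{−v_j}` and `κ_j = e^{k_j}`. In
the coordinates `(v, k)` the tangent vectors, multiplied by the inverse matrix, have rank at most
two, so that the antisymmetrised trace collapses to a sum over permutations `τ` of
`q^{1 + asc τ} / (1 − q)^g` with `q = ∏ w_j`. Worpitzky's identity turns this sum into the series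
`∑ (n + 1)^{g−1} e^{−(n+1) ∑ v_j}` (up to a constant factor and a sign). For fixed `v` with
`s = ∑ v_j` the vectors `k` fill a simplex of volume `s^{g−1} / (g−1)!`; the simplex of all `v`
with sum `s` contributes the same factor, and a Gamma integral for each `n` produces the zeta
series.

The coordinates are bijective onto the cell because the parallel-sum recursion
`U_i = y_i + x_{i+1} U_{i+1} / (x_{i+1} + U_{i+1})` around the rim has a unique positive solution.
Since the integrand is continuous and vanishes nowhere on the convex cell, it has constant sign, so
the absolute value of the integral is the integral of the absolute value.
-/

/-! ### Worpitzky's identity -/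

section Worpitzky

/-- The number of adjacent ascents `a < b` of a list; over all permutations of `m` letters it is
counted by the Eulerian numbers. -/
def ascents {α : Type*} [LinearOrder α] : List α → ℕ
  | a :: b :: l => (if a < b then 1 else 0) + ascents (b :: l)
  | _ => 0

variable {α R : Type*} [LinearOrder α] [CommRing R]

theorem ascents_le_length : ∀ l : List α, ascents l ≤ l.length
  | [] | [_] => by simp [ascents]
  | a :: b :: l => by
      have := ascents_le_length (b :: l)
      simp only [ascents, List.length_cons] at this ⊢
      split_ifs <;> omega

theorem ascents_cons_of_le {a : α} {l : List α}
    (h : ∀ b ∈ l, b ≤ a) : ascents (a :: l) = ascents l := by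
  cases l with
  | nil => rfl
  | cons b l => simp [ascents, (h b List.mem_cons_self).not_gt]

theorem ascents_map {β : Type*} [LinearOrder β] {f : α → β}
    (hf : StrictMono f) : ∀ l : List α, ascents (l.map f) = ascents l
  | [] | [_] => rfl
  | a :: b :: l => by
      have := ascents_map hf (b :: l)
      simp only [List.map_cons, ascents, hf.lt_iff_lt] at this ⊢
      rw [this]

theorem sum_ascents_cons_permutations'Aux {t : α} {ys : List α} (hys : ∀ a ∈ ys, a < t) {y : α}
    (hy : y < t) (F : ℕ → R) :
    ((List.permutations'Aux t ys).map fun l => F (ascents (y :: l))).sum =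
      ascents (y :: ys) * F (ascents (y :: ys)) +
        (ys.length + 1 - ascents (y :: ys)) * F (ascents (y :: ys) + 1) := by
  induction ys generalizing y F with
  | nil => simp [List.permutations'Aux, ascents, hy]
  | cons z zs ih =>
    obtain ⟨hz, hzs⟩ := List.forall_mem_cons.1 hys
    have := ih hzs hz fun n => F ((if y < z then 1 else 0) + n)
    simp only [List.permutations'Aux, List.map_cons, List.map_map, List.sum_cons,
      Function.comp_def, ascents, hy, if_true, hz.not_gt, if_false, List.length_cons] at this ⊢
    rw [this]
    split_ifs <;> push_cast <;> simp only [add_comm, zero_add, add_zero] <;> ring_nf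

/-- Inserting a new maximum at the front or inside an ascent keeps the number of ascents, any
other insertion raises it by one. -/
theorem sum_ascents_permutations'Aux {t : α} {l : List α} (hl : ∀ a ∈ l, a < t) (F : ℕ → R) :
    ((List.permutations'Aux t l).map fun l => F (ascents l)).sum =
      (ascents l + 1) * F (ascents l) + (l.length - ascents l) * F (ascents l + 1) := by
  cases l with
  | nil => simp [List.permutations'Aux, ascents]
  | cons y ys =>
    obtain ⟨hy, hys⟩ := List.forall_mem_cons.1 hl
    have := sum_ascents_cons_permutations'Aux hys hy F
    simp only [List.permutations'Aux, List.map_cons, List.map_map, List.sum_cons,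
      Function.comp_def, List.length_cons] at this ⊢
    rw [this]
    simp only [ascents, hy.not_gt, if_false, zero_add]
    push_cast
    ring

theorem succ_mul_choose_add_sub {n m a : ℕ} (ha : a ≤ m) :
    ((n : R) + 1) * (n + m - a).choose m =
      (a + 1) * (n + (m + 1) - a).choose (m + 1) +
        (m - a) * (n + (m + 1) - (a + 1)).choose (m + 1) := by
  obtain ⟨b, rfl⟩ := Nat.exists_eq_add_of_le ha
  rw [show n + (a + b) - a = n + b by omega, show n + (a + b + 1) - a = n + b + 1 by omega,
    show n + (a + b + 1) - (a + 1) = n + b by omega, Nat.choose_succ_succ]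
  have absorb : ((n + b).choose (a + b + 1) : R) * (a + b + 1) =
      (n + b).choose (a + b) * (n - a) := by
    rcases le_or_gt (a + b) (n + b) with h | h
    · have := congrArg (Nat.cast (R := R)) (Nat.choose_succ_right_eq (n + b) (a + b))
      push_cast [Nat.cast_sub h] at this
      linear_combination this
    · rw [Nat.choose_eq_zero_of_lt h, Nat.choose_eq_zero_of_lt (by omega)]; simp
  push_cast
  linear_combination -absorb

theorem worpitzky (n m : ℕ) :
    ((List.range m).reverse.permutations'.map fun l => ((n + m - ascents l).choose m : R)).sum =
      ((n : R) + 1) ^ m := by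
  induction m with
  | zero => simp
  | succ m ih =>
    rw [List.range_succ, List.reverse_append, List.reverse_singleton, List.singleton_append,
      List.permutations', List.map_flatMap, List.flatMap_def, List.sum_flatten, List.map_map,
      pow_succ, ← ih, ← List.sum_map_mul_right]
    refine congrArg List.sum (List.map_congr_left fun l hl => ?_)
    have hperm := List.mem_permutations'.1 hl
    have hlen : l.length = m := by simpa using hperm.length_eq
    have hlt : ∀ a ∈ l, a < m := fun a ha => by simpa using hperm.subset ha
    rw [Function.comp_apply,
      sum_ascents_permutations'Aux hlt (fun a => ((n + (m + 1) - a).choose (m + 1) : R)),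
      hlen, mul_comm _ ((n : R) + 1), succ_mul_choose_add_sub (hlen ▸ ascents_le_length l)]

end Worpitzky

theorem sum_perm_ofFn_eq_sum_permutations' {M : Type*} [AddCommMonoid M] (m : ℕ)
    (F : List ℕ → M) :
    ∑ τ : Equiv.Perm (Fin m), F (List.ofFn fun i => (τ i : ℕ)) =
      ((List.range m).reverse.permutations'.map F).sum := by
  have hrange : (List.range m).reverse.Nodup := List.nodup_reverse.2 List.nodup_range
  rw [← List.sum_toFinset _ ((List.permutations_perm_permutations' _).symm.nodup_iff.2
    (List.nodup_permutations _ hrange))]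
  refine Finset.sum_bij (fun τ _ => List.ofFn fun i => (τ i : ℕ)) (fun τ _ => ?_)
    (fun τ _ τ' _ h => ?_) (fun l hl => ?_) fun τ _ => rfl
  · rw [List.mem_toFinset, List.mem_permutations']
    refine (List.perm_ext_iff_of_nodup
      (List.nodup_ofFn.2 (Fin.val_injective.comp τ.injective)) hrange).2 fun a => ?_
    rw [List.mem_ofFn, List.mem_reverse, List.mem_range]
    exact ⟨fun ⟨i, hi⟩ => hi ▸ (τ i).2, fun h => ⟨τ.symm ⟨a, h⟩, by simp⟩⟩
  · exact Equiv.ext fun i => Fin.ext (congrFun (List.ofFn_injective h) i)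
  · rw [List.mem_toFinset, List.mem_permutations'] at hl
    obtain rfl : l.length = m := by simpa using hl.length_eq
    have hlt (i : Fin l.length) : l.get i < l.length := by
      simpa using hl.subset (List.get_mem l i)
    have hinj : Function.Injective fun i => (⟨l.get i, hlt i⟩ : Fin l.length) := fun i j h =>
      List.nodup_iff_injective_get.1 (hl.nodup_iff.2 hrange) (by simpa using h)
    exact ⟨Equiv.ofBijective _ (Finite.injective_iff_bijective.1 hinj), Finset.mem_univ _, by simp⟩

section Geometric

variable {𝕜 : Type*} [NormedField 𝕜] {q : 𝕜}

theorem hasSum_choose_sub_mul_geometric {m a : ℕ} (ha : a ≤ m) (hq : ‖q‖ < 1) :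
    HasSum (fun n : ℕ => ((n + m - a).choose m : 𝕜) * q ^ (n + 1))
      (q ^ (1 + a) / (1 - q) ^ (m + 1)) := by
  have h := (hasSum_choose_mul_geometric_of_norm_lt_one m hq).mul_left (q ^ (1 + a))
  rw [mul_one_div] at h
  rw [← (add_left_injective a).hasSum_iff fun n hn => ?_]
  · refine h.congr_fun fun n => ?_
    rw [Function.comp_apply, show n + a + m - a = n + m by omega]
    ring
  · have : n < a := lt_of_not_ge fun hle => hn ⟨n - a, Nat.sub_add_cancel hle⟩
    rw [Nat.choose_eq_zero_of_lt (by omega), Nat.cast_zero, zero_mul]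

theorem hasSum_succ_pow_mul_geometric (m : ℕ) (hq : ‖q‖ < 1) :
    HasSum (fun n : ℕ => ((n : 𝕜) + 1) ^ m * q ^ (n + 1))
      ((∑ τ : Equiv.Perm (Fin m), q ^ (1 + ascents (List.ofFn fun i => (τ i : ℕ)))) /
        (1 - q) ^ (m + 1)) := by
  rw [Finset.sum_div]
  refine (hasSum_sum fun τ _ => hasSum_choose_sub_mul_geometric ?_ hq).congr_fun fun n => ?_
  · simpa using ascents_le_length (List.ofFn fun i => (τ i : ℕ))
  · rw [← Finset.sum_mul, ← worpitzky n m,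
      ← sum_perm_ofFn_eq_sum_permutations' m fun l => ((n + m - ascents l).choose m : 𝕜)]

end Geometric

/-! ### Words of rank-one and rank-two letters -/

section Words

open Matrix

variable {n I R : Type*} [CommRing R]

/-- The letter `f ⊗ u` (second component `0`) or `f ⊗ p + f' ⊗ u` (second component `1`) with a
given index. These are the matrices by which `M⁻¹ dM` acts in the coordinate directions of the
chart of the wheel cell. -/
def wordLetter (u p f f' : I → n → R) (a : I × Fin 2) : Matrix n n R :=
  if a.2 = 0 then vecMulVec (f a.1) (u a.1)
  else vecMulVec (f a.1) (p a.1) + vecMulVec (f' a.1) (u a.1)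

/-- The word `(j₁, 0) (j₁, 1) (j₂, 0) (j₂, 1) …` on the indices `j₁, j₂, …`. -/
def pairedWord (l : List I) : List (I × Fin 2) :=
  l.flatMap fun j => [(j, 0), (j, 1)]

/-- The product `N j₁ j₂ * N j₂ j₃ * ⋯ * N jₖ i₀` along a list `j₁, …, jₖ`. -/
def chainWeight (N : I → I → R) (i₀ : I) : List I → R
  | [] => 1
  | j :: l => N j (l.headD i₀) * chainWeight N i₀ l

theorem pairedWord_cons (j : I) (l : List I) :
    pairedWord (j :: l) = (j, 0) :: (j, 1) :: pairedWord l := rfl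

theorem mem_pairedWord {a : I × Fin 2} {l : List I} : a ∈ pairedWord l ↔ a.1 ∈ l := by
  obtain ⟨j, b⟩ := a
  fin_cases b <;> simp [pairedWord]

theorem nodup_of_nodup_pairedWord {l : List I} (h : (pairedWord l).Nodup) : l.Nodup := by
  induction l with
  | nil => exact List.nodup_nil
  | cons j l ih =>
    rw [pairedWord_cons] at h
    exact List.nodup_cons.2 ⟨fun hj => (List.nodup_cons.1 h).1
      (List.mem_cons_of_mem _ (mem_pairedWord.2 hj)), ih h.of_cons.of_cons⟩

theorem countP_one_pairedWord (l : List I) :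
    (pairedWord l).countP (fun a => a.2 = 1) = (pairedWord l).countP fun a => a.2 = 0 := by
  induction l with
  | nil => rfl
  | cons j l ih => simp [pairedWord_cons, ih]

theorem ne_headD {i₀ k : I} {l : List I} (h₀ : k ≠ i₀) (hl : k ∉ l) : k ≠ l.headD i₀ := by
  cases l with
  | nil => exact h₀
  | cons j l => exact List.ne_of_not_mem_cons hl

variable [Fintype n] {u p f f' : I → n → R}

theorem wordLetter_zero_mulVec (j : I) (v : n → R) :
    wordLetter u p f f' (j, 0) *ᵥ v = (u j ⬝ᵥ v) • f j := by
  simp [wordLetter, vecMulVec_mulVec]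

variable [DecidableEq I]

theorem wordLetter_one_mulVec (hd : ∀ i j, u i ⬝ᵥ f j = if i = j then 1 else 0) {j k : I}
    (h : j ≠ k) :
    wordLetter u p f f' (j, 1) *ᵥ f k = (p j ⬝ᵥ f k) • f j := by
  simp [wordLetter, vecMulVec_mulVec, hd, h, add_mulVec]

variable [DecidableEq n]

theorem pairedWord_mulVec (hd : ∀ i j, u i ⬝ᵥ f j = if i = j then 1 else 0) {i₀ : I} {l : List I}
    (hl : l.Nodup) (h₀ : i₀ ∉ l) :
    ((pairedWord l).map (wordLetter u p f f')).prod *ᵥ f i₀ =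
      chainWeight (fun i j => p i ⬝ᵥ f j) i₀ l • f (l.headD i₀) := by
  induction l with
  | nil => simp [pairedWord, chainWeight]
  | cons j l ih =>
    obtain ⟨hj, hl⟩ := List.nodup_cons.1 hl
    obtain ⟨hj₀, h₀⟩ := not_or.1 (List.mem_cons.not.1 h₀)
    simp only [pairedWord_cons, List.map_cons, List.prod_cons, ← mulVec_mulVec, ih hl h₀,
      mulVec_smul, wordLetter_one_mulVec hd (ne_headD (Ne.symm hj₀) hj), wordLetter_zero_mulVec,
      hd, if_true, one_smul, smul_smul, mul_comm, chainWeight, List.headD_cons]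

/-- By duality a letter `(j, 0)` survives only on a multiple of `f j`, which must have been
produced by the letter `(j, 1)` to its right. -/
theorem word_mulVec_eq_zero_or_eq_pairedWord
    (hd : ∀ i j, u i ⬝ᵥ f j = if i = j then 1 else 0) {i₀ : I} :
    ∀ L : List (I × Fin 2), L.Nodup → (∀ a ∈ L, a.1 ≠ i₀) →
      L.countP (fun a => a.2 = 1) ≤ L.countP (fun a => a.2 = 0) →
      (L.map (wordLetter u p f f')).prod *ᵥ f i₀ = 0 ∨ ∃ l, L = pairedWord l
  | [], _, _, _ => Or.inr ⟨[], rfl⟩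
  | (j, 1) :: L, hL, h₀, hc => by
    simp only [List.countP_cons, decide_true, if_true, one_ne_zero, decide_false,
      Bool.false_eq_true, if_false, add_zero] at hc
    rcases word_mulVec_eq_zero_or_eq_pairedWord hd L hL.of_cons (List.forall_mem_cons.1 h₀).2
      (by omega) with h | ⟨l, rfl⟩
    · left
      rw [List.map_cons, List.prod_cons, ← mulVec_mulVec, h, mulVec_zero]
    · rw [countP_one_pairedWord] at hc
      omega
  | [(j, 0)], _, h₀, _ => by
    left
    simp [wordLetter_zero_mulVec, hd, h₀ (j, 0) (by simp)]
  | (j, 0) :: (k, 0) :: L, hL, _, _ => by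
    left
    have hjk : j ≠ k := fun h => (List.nodup_cons.1 hL).1 (by simp [h])
    simp only [List.map_cons, List.prod_cons, ← mulVec_mulVec, wordLetter_zero_mulVec, mulVec_smul,
      hd, if_neg hjk, zero_smul, smul_zero]
  | (j, 0) :: (k, 1) :: L, hL, h₀, hc => by
    obtain ⟨hk, hL⟩ := List.nodup_cons.1 hL.of_cons
    obtain ⟨hk₀, h₀⟩ := List.forall_mem_cons.1 (List.forall_mem_cons.1 h₀).2
    simp only [List.countP_cons, decide_true, if_true, one_ne_zero, zero_ne_one, decide_false,
      Bool.false_eq_true, if_false, add_zero] at hc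
    simp only [List.map_cons, List.prod_cons, ← mulVec_mulVec]
    rcases word_mulVec_eq_zero_or_eq_pairedWord hd L hL h₀ (by omega) with h | ⟨l, rfl⟩
    · left
      rw [h, mulVec_zero, mulVec_zero]
    rcases eq_or_ne j k with rfl | hjk
    · exact Or.inr ⟨j :: l, rfl⟩
    left
    rw [mem_pairedWord] at hk
    rw [pairedWord_mulVec hd (nodup_of_nodup_pairedWord hL)
        fun h => h₀ (i₀, 0) (mem_pairedWord.2 h) rfl,
      mulVec_smul, wordLetter_one_mulVec hd (ne_headD hk₀ hk), mulVec_smul, mulVec_smul,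
      wordLetter_zero_mulVec, hd, if_neg hjk, zero_smul, smul_zero, smul_zero]

end Words

/-! ### Antisymmetrised products -/

section Rotation

variable {R : Type*} [CommRing R]

open scoped Fin.NatCast Fin.CommRing in
theorem finRotate_pow_apply {N : ℕ} (k : ℕ) (i : Fin (N + 1)) :
    (finRotate (N + 1) ^ k) i = i + (k : Fin (N + 1)) := by
  induction k with
  | zero => simp
  | succ k ih => rw [pow_succ', Equiv.Perm.mul_apply, ih, finRotate_apply, Nat.cast_succ, add_assoc]

theorem bijective_decomposeFin_symm_mul_finRotate_pow (N : ℕ) :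
    Function.Bijective fun a : Fin (N + 1) × Equiv.Perm (Fin N) =>
      Equiv.Perm.decomposeFin.symm (0, a.2) * finRotate (N + 1) ^ (a.1 : ℕ) := by
  rw [Fintype.bijective_iff_injective_and_card]
  refine ⟨?_, by simp [Fintype.card_perm, Nat.factorial_succ]⟩
  rintro ⟨r, e⟩ ⟨r', e'⟩ h
  have happ (i : Fin (N + 1)) : Equiv.Perm.decomposeFin.symm (0, e) (i + r) =
      Equiv.Perm.decomposeFin.symm (0, e') (i + r') := by
    simpa [finRotate_pow_apply, Fin.cast_val_eq_self] using congrArg (· i) h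
  obtain rfl : r = r' := by
    have h0 := happ (-r')
    rw [neg_add_cancel, Equiv.Perm.decomposeFin_symm_apply_zero,
      ← Equiv.Perm.decomposeFin_symm_apply_zero 0 e] at h0
    exact (neg_add_eq_zero.1 ((Equiv.Perm.decomposeFin.symm (0, e)).injective h0)).symm
  simpa using Equiv.Perm.decomposeFin.symm.injective (mul_right_cancel h)

theorem sum_perm_of_map_mul_finRotate {N : ℕ} {F : Equiv.Perm (Fin (N + 1)) → R} {s : R}
    (hF : ∀ σ, F (σ * finRotate (N + 1)) = s * F σ) :
    ∑ σ, F σ = (∑ r ∈ Finset.range (N + 1), s ^ r) *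
      ∑ e : Equiv.Perm (Fin N), F (Equiv.Perm.decomposeFin.symm (0, e)) := by
  have hpow (k : ℕ) (σ) : F (σ * finRotate (N + 1) ^ k) = s ^ k * F σ := by
    induction k with
    | zero => simp
    | succ k ih => rw [pow_succ, ← mul_assoc, hF, ih, pow_succ', mul_assoc]
  rw [← Equiv.sum_comp (Equiv.ofBijective _ (bijective_decomposeFin_symm_mul_finRotate_pow N)),
    Fintype.sum_prod_type, ← Fin.sum_univ_eq_sum_range, Finset.sum_mul_sum]
  simp only [Equiv.ofBijective_apply, hpow]

end Rotation

theorem sign_revPerm (n : ℕ) :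
    Equiv.Perm.sign (Fin.revPerm : Equiv.Perm (Fin n)) = (-1) ^ (n * (n - 1) / 2) := by
  rw [Equiv.Perm.sign_eq_prod_prod_Iio, ← Finset.sum_range_id,
    ← Fin.sum_univ_eq_sum_range (fun i => i), ← Finset.prod_pow_eq_pow_sum]
  refine Finset.prod_congr rfl fun j _ => ?_
  rw [Finset.prod_congr rfl (g := fun _ => (-1 : ℤˣ)) fun i hi => if_neg ?_]
  · simp
  · simpa using (Finset.mem_Iio.1 hi).le

theorem ofFn_comp_rev {α : Type*} {n : ℕ} (f : Fin n → α) :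
    List.ofFn (f ∘ Fin.rev) = (List.ofFn f).reverse := by
  refine List.ext_getElem (by simp) fun i h₁ h₂ => ?_
  simp only [List.getElem_ofFn, List.getElem_reverse, List.length_ofFn, Function.comp]
  congr 1
  ext
  simp only [Fin.val_rev]
  omega

section AltProd

variable {R A : Type*} [CommRing R] [Ring A] [Algebra R A]

/-- The antisymmetrised product `∑ σ, sign σ • V (σ 0) * ⋯ * V (σ (N - 1))`, i.e. the standard
polynomial of degree `N`. The form `tr ((X⁻¹ dX) ^ N)` is its trace on the vectors `X⁻¹ * V i`. -/
noncomputable def altProd (R A : Type*) [CommRing R] [Ring A] [Algebra R A] (N : ℕ) :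
    A [⋀^Fin N]→ₗ[R] A :=
  MultilinearMap.alternatization (MultilinearMap.mkPiAlgebraFin R N A)

theorem altProd_apply {N : ℕ} (V : Fin N → A) :
    altProd R A N V = ∑ σ : Equiv.Perm (Fin N),
      ((Equiv.Perm.sign σ : ℤ) : R) • (List.ofFn (V ∘ σ)).prod := by
  rw [altProd, MultilinearMap.alternatization_apply]
  refine Finset.sum_congr rfl fun σ _ => ?_
  rw [Units.smul_def, Int.cast_smul_eq_zsmul, MultilinearMap.domDomCongr_apply,
    MultilinearMap.mkPiAlgebraFin_apply]
  rfl

end AltProd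

section Trace

open Matrix

variable {n R : Type*} [Fintype n] [DecidableEq n] [CommRing R]

/-- Rotating a word cyclically preserves its trace, so the first letter of each word may be taken
to be the first vector. -/
theorem trace_altProd_succ {N : ℕ} (V : Fin (N + 1) → Matrix n n R) :
    (altProd R _ (N + 1) V).trace =
      (∑ r ∈ Finset.range (N + 1), ((-1) ^ N : R) ^ r) *
        (V 0 * altProd R _ N (Fin.tail V)).trace := by
  simp only [altProd_apply, trace_sum, Finset.mul_sum, trace_smul, Matrix.mul_smul]
  rw [sum_perm_of_map_mul_finRotate (s := (-1) ^ N), Finset.mul_sum]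
  · refine Finset.sum_congr rfl fun e _ => ?_
    rw [Equiv.Perm.decomposeFin.symm_sign, List.ofFn_succ]
    simp [Equiv.Perm.decomposeFin_symm_apply_succ, Fin.tail, Function.comp_def]
  · intro σ
    rw [Equiv.Perm.sign_mul, sign_finRotate, Nat.add_sub_cancel, List.ofFn_succ', List.ofFn_succ,
      List.concat_eq_append, List.prod_append, trace_mul_comm]
    simp only [Function.comp_apply, Equiv.Perm.mul_apply, List.prod_cons, List.prod_nil, mul_one,
      finRotate_apply, Fin.coeSucc_eq_succ, Fin.last_add_one, smul_eq_mul]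
    push_cast
    ring

theorem trace_altProd_succ_of_even {N : ℕ} (hN : Even N) (V : Fin (N + 1) → Matrix n n R) :
    (altProd R _ (N + 1) V).trace = (N + 1) * (V 0 * altProd R _ N (Fin.tail V)).trace := by
  simp [trace_altProd_succ, hN.neg_one_pow]

theorem trace_altProd_eq_zero_of_odd {N : ℕ} (hN : Odd N) (V : Fin (N + 1) → Matrix n n R) :
    (altProd R _ (N + 1) V).trace = 0 := by
  simp [trace_altProd_succ, hN.neg_one_pow, neg_one_geom_sum, hN.add_one]

theorem trace_altProd_eq_zero_of_eq_one {N : ℕ} (hN : Odd N) (h1 : 1 < N)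
    {V : Fin N → Matrix n n R} {i : Fin N} (hi : V i = 1) : (altProd R _ N V).trace = 0 := by
  obtain ⟨k, rfl⟩ : ∃ k, N = k + 1 + 1 := ⟨N - 2, by omega⟩
  have hk : Odd k := by simpa [parity_simps] using hN
  have hswap : (altProd R _ _ (V ∘ Equiv.swap 0 i)).trace = 0 := by
    rw [trace_altProd_succ_of_even hk.add_one, Function.comp_apply, Equiv.swap_apply_left, hi,
      one_mul, trace_altProd_eq_zero_of_odd hk, mul_zero]
  rw [AlternatingMap.map_perm] at hswap
  rcases Int.units_eq_one_or (Equiv.Perm.sign (Equiv.swap 0 i)) with h | h <;>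
    simpa [h] using hswap

theorem trace_altProd_add_smul_one {N : ℕ} (hN : Odd N) (h1 : 1 < N) (V : Fin N → Matrix n n R)
    (c : Fin N → R) :
    (altProd R _ N fun i => V i + c i • 1).trace = (altProd R _ N V).trace := by
  have h := (altProd R (Matrix n n R) N).toMultilinearMap.map_add_univ V fun i => c i • 1
  refine (congrArg trace h).trans ?_
  rw [trace_sum, Finset.sum_eq_single Finset.univ, Finset.piecewise_univ]
  · rfl
  · intro s _ hs
    obtain ⟨i, hi⟩ : ∃ i, i ∉ s := by
      contrapose! hs
      exact Finset.eq_univ_iff_forall.2 hs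
    set W := s.piecewise V fun i => c i • (1 : Matrix n n R)
    have hW : W = Function.update W i (c i • 1) := by
      rw [eq_comm, Function.update_eq_self_iff]
      simp [W, hi]
    rw [hW, MultilinearMap.map_update_smul, trace_smul, AlternatingMap.coe_multilinearMap,
      trace_altProd_eq_zero_of_eq_one hN h1 (Function.update_self ..), smul_zero]
  · simp

theorem isAdjointPair_list_prod {X : Matrix n n R} :
    ∀ {l : List (Matrix n n R)}, (∀ A ∈ l, IsAdjointPair X X A A) →
      IsAdjointPair X X l.prod l.reverse.prod
  | [], _ => by simp [IsAdjointPair]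
  | A :: l, h => by
    have hA : Aᵀ * X = X * A := h A List.mem_cons_self
    have hl : l.prodᵀ * X = X * l.reverse.prod :=
      isAdjointPair_list_prod fun B hB => h B (List.mem_cons_of_mem _ hB)
    rw [IsAdjointPair, List.prod_cons, transpose_mul, List.reverse_cons, List.prod_append,
      Matrix.mul_assoc, hA, ← Matrix.mul_assoc, hl, List.prod_singleton, Matrix.mul_assoc]

theorem isAdjointPair_altProd {X : Matrix n n R} {N : ℕ} {V : Fin N → Matrix n n R}
    (hV : ∀ i, IsAdjointPair X X (V i) (V i)) (hN : Even (N * (N - 1) / 2)) :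
    IsAdjointPair X X (altProd R _ N V) (altProd R _ N V) := by
  have hsign : Equiv.Perm.sign (Fin.revPerm : Equiv.Perm (Fin N)) = 1 := by
    rw [sign_revPerm, hN.neg_one_pow]
  unfold IsAdjointPair
  conv_rhs => rw [altProd_apply, ← Equiv.sum_comp (Equiv.mulRight Fin.revPerm)]
  simp only [altProd_apply, transpose_sum, transpose_smul, Finset.sum_mul, Finset.mul_sum,
    Matrix.smul_mul, Matrix.mul_smul]
  refine Finset.sum_congr rfl fun σ _ => ?_
  have hσ : (List.ofFn (V ∘ σ)).prodᵀ * X = X * (List.ofFn (V ∘ σ)).reverse.prod :=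
    isAdjointPair_list_prod (List.forall_mem_ofFn_iff.2 fun i => hV (σ i))
  rw [hσ, ← ofFn_comp_rev, Equiv.coe_mulRight, Equiv.Perm.sign_mul, hsign, mul_one]
  rfl

theorem trace_mul_eq_of_isAdjointPair {X A B P : Matrix n n R} (hX : IsUnit X.det)
    (hAB : IsAdjointPair X X B A) (hP : IsAdjointPair X X P P) : (B * P).trace = (A * P).trace := by
  have hA : A = X⁻¹ * (Bᵀ * X) := by rw [hAB, nonsing_inv_mul_cancel_left _ _ hX]
  have hP : Pᵀ * X = X * P := hP
  calc (B * P).trace = (Bᵀ * Pᵀ).trace := by rw [← trace_transpose, transpose_mul, trace_mul_comm]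
    _ = (X⁻¹ * (Bᵀ * Pᵀ * X)).trace := by
      rw [trace_mul_comm X⁻¹, mul_nonsing_inv_cancel_right _ _ hX]
    _ = (A * P).trace := by
      rw [hA, Matrix.mul_assoc X⁻¹, Matrix.mul_assoc Bᵀ X, Matrix.mul_assoc Bᵀ Pᵀ, hP]

end Trace

section LetterSums

open Matrix

variable {I : Type*} {m : ℕ}

/-- The enumeration `(0, 0), (0, 1), (1, 0), (1, 1), …` of `Fin m × Fin 2`. -/
def pairEquiv (m : ℕ) : Fin m × Fin 2 ≃ Fin (2 * m) :=
  finProdFinEquiv.trans (finCongr (mul_comm m 2))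

/-- The sequence `(g 0, 0), (g 0, 1), (g 1, 0), (g 1, 1), …` of letters. -/
def pairLetters (g : Fin m → I) : Fin (2 * m) → I × Fin 2 :=
  Prod.map g id ∘ (pairEquiv m).symm

theorem pairedWord_ofFn (g : Fin m → I) : pairedWord (List.ofFn g) = List.ofFn (pairLetters g) := by
  rw [List.ofFn_mul', pairedWord, List.flatMap_def, List.map_ofFn]
  congr 2
  funext i
  have h (b : Fin 2) : (⟨2 * (i : ℕ) + b, by omega⟩ : Fin (2 * m)) = pairEquiv m (i, b) := by
    ext
    simp [pairEquiv, add_comm]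
  simp [h, List.ofFn_succ, pairLetters]

theorem length_pairedWord (l : List I) : (pairedWord l).length = 2 * l.length := by
  induction l with
  | nil => rfl
  | cons j l ih => simp [pairedWord_cons, ih, mul_add]

theorem pairLetters_injective {g : Fin m → I} (hg : Function.Injective g) :
    Function.Injective (pairLetters g) :=
  (hg.prodMap Function.injective_id).comp (pairEquiv m).symm.injective

/-- The permutation of `Fin (2 * m)` moving consecutive pairs according to `τ`. -/
def pairPerm (τ : Equiv.Perm (Fin m)) : Equiv.Perm (Fin (2 * m)) :=
  (pairEquiv m).permCongr (Equiv.prodCongrLeft fun _ : Fin 2 => τ)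

theorem pairPerm_pairEquiv (τ : Equiv.Perm (Fin m)) (k : Fin m) (b : Fin 2) :
    pairPerm τ (pairEquiv m (k, b)) = pairEquiv m (τ k, b) := by
  simp [pairPerm, Equiv.permCongr_apply]

theorem sign_pairPerm (τ : Equiv.Perm (Fin m)) : Equiv.Perm.sign (pairPerm τ) = 1 := by
  simp [pairPerm, Equiv.Perm.sign_permCongr, Equiv.Perm.sign_prodCongrLeft]

theorem pairLetters_comp_pairPerm (g : Fin m → I) (τ : Equiv.Perm (Fin m)) :
    pairLetters g ∘ pairPerm τ = pairLetters (g ∘ τ) := by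
  funext a
  obtain ⟨⟨k, b⟩, rfl⟩ := (pairEquiv m).surjective a
  simp [pairLetters, pairPerm_pairEquiv]

theorem pairPerm_injective : Function.Injective (pairPerm (m := m)) := by
  intro σ τ h
  refine Equiv.ext fun k => ?_
  simpa [pairPerm_pairEquiv] using congrArg (· (pairEquiv m (k, 0))) h

theorem mem_range_pairPerm {g : Fin m → I} (hg : Function.Injective g)
    {e : Equiv.Perm (Fin (2 * m))} {l : List I}
    (h : List.ofFn (pairLetters g ∘ e) = pairedWord l) : e ∈ Set.range pairPerm := by
  have hlen : l.length = m := by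
    have := congrArg List.length h
    rw [length_pairedWord, List.length_ofFn] at this
    omega
  obtain ⟨g', rfl⟩ : ∃ g' : Fin m → I, l = List.ofFn g' := by
    subst hlen
    exact ⟨l.get, (List.ofFn_get l).symm⟩
  rw [pairedWord_ofFn, List.ofFn_inj] at h
  let e' : Fin m × Fin 2 → Fin m × Fin 2 := fun a => (pairEquiv m).symm (e (pairEquiv m a))
  have he' : Function.Injective e' :=
    (pairEquiv m).symm.injective.comp (e.injective.comp (pairEquiv m).injective)
  have hcoord (k : Fin m) (b : Fin 2) : g (e' (k, b)).1 = g' k ∧ (e' (k, b)).2 = b := by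
    simpa [pairLetters, Prod.ext_iff] using congrFun h (pairEquiv m (k, b))
  have hpair (k : Fin m) (b : Fin 2) : e' (k, b) = ((e' (k, 0)).1, b) :=
    Prod.ext (hg ((hcoord k b).1.trans (hcoord k 0).1.symm)) (hcoord k b).2
  have hinj : Function.Injective fun k => (e' (k, 0)).1 := fun k k' hk =>
    congrArg Prod.fst (he' (Prod.ext hk ((hcoord k 0).2.trans (hcoord k' 0).2.symm)))
  refine ⟨Equiv.ofBijective _ (Finite.injective_iff_bijective.1 hinj), Equiv.ext fun a => ?_⟩
  obtain ⟨⟨k, b⟩, rfl⟩ := (pairEquiv m).surjective a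
  rw [pairPerm_pairEquiv, Equiv.ofBijective_apply, ← hpair, Equiv.apply_symm_apply]

variable {n R : Type*} [Fintype n] [CommRing R] {u p f f' : I → n → R}

theorem isAdjointPair_vecMulVec {X : Matrix n n R} (hX : X.IsSymm) {κ : R} {u p f f' : n → R}
    (hf : X *ᵥ f = κ • u) (hf' : X *ᵥ f' = κ • p) :
    IsAdjointPair X X (vecMulVec f' u) (vecMulVec f p) := by
  rw [IsAdjointPair, transpose_vecMulVec, vecMulVec_mul, mul_vecMulVec, hf, ← mulVec_transpose,
    hX.eq, hf', smul_vecMulVec, vecMulVec_smul]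

theorem trace_vecMulVec_mul (a b : n → R) (Q : Matrix n n R) :
    (vecMulVec a b * Q).trace = b ⬝ᵥ (Q *ᵥ a) := by
  rw [trace_mul_comm, mul_vecMulVec, trace_vecMulVec, dotProduct_comm]

theorem isAdjointPair_wordLetter {X : Matrix n n R} (hX : X.IsSymm) {κ : I → R}
    (hf : ∀ j, X *ᵥ f j = κ j • u j) (hf' : ∀ j, X *ᵥ f' j = κ j • p j) (a : I × Fin 2) :
    IsAdjointPair X X (wordLetter u p f f' a) (wordLetter u p f f' a) := by
  unfold wordLetter
  split_ifs
  · exact isAdjointPair_vecMulVec hX (hf _) (hf _)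
  · have h₁ := isAdjointPair_vecMulVec hX (hf a.1) (hf' a.1)
    have h₂ := isAdjointPair_vecMulVec hX (hf' a.1) (hf a.1)
    rw [IsAdjointPair] at h₁ h₂ ⊢
    rw [transpose_add, Matrix.add_mul, Matrix.mul_add, h₁, h₂, add_comm]

variable [DecidableEq n] [DecidableEq I]

theorem altProd_letters_mulVec (hd : ∀ i j, u i ⬝ᵥ f j = if i = j then 1 else 0) {g : Fin m → I}
    (hg : Function.Injective g) {i₀ : I} (h₀ : i₀ ∉ Set.range g) :
    altProd R _ (2 * m) (wordLetter u p f f' ∘ pairLetters g) *ᵥ f i₀ =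
      ∑ τ : Equiv.Perm (Fin m), chainWeight (fun i j => p i ⬝ᵥ f j) i₀ (List.ofFn (g ∘ τ)) •
        f ((List.ofFn (g ∘ τ)).headD i₀) := by
  simp only [altProd_apply, sum_mulVec, smul_mulVec, Function.comp_assoc,
    ← List.map_ofFn (g := wordLetter u p f f')]
  symm
  refine Fintype.sum_of_injective pairPerm pairPerm_injective _ _ (fun e he => ?_) fun τ => ?_
  · have hperm : (List.ofFn (pairLetters g ∘ e)).Perm (pairedWord (List.ofFn g)) := by
      rw [pairedWord_ofFn]
      exact Equiv.Perm.ofFn_comp_perm e (pairLetters g)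
    rcases word_mulVec_eq_zero_or_eq_pairedWord hd (i₀ := i₀) (u := u) (p := p) (f' := f')
      (List.ofFn (pairLetters g ∘ e))
      (List.nodup_ofFn.2 ((pairLetters_injective hg).comp e.injective))
      (List.forall_mem_ofFn_iff.2 fun i hi => h₀ ⟨_, hi⟩)
      (by rw [hperm.countP_eq, hperm.countP_eq, countP_one_pairedWord]) with h | ⟨l, hl⟩
    · rw [h, smul_zero]
    · exact absurd (mem_range_pairPerm hg hl) he
  · rw [sign_pairPerm, pairLetters_comp_pairPerm, ← pairedWord_ofFn, pairedWord_mulVec hd]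
    · simp
    · exact List.nodup_ofFn.2 (hg.comp τ.injective)
    · exact fun h => h₀ (by obtain ⟨i, hi⟩ := List.mem_ofFn.1 h; exact ⟨τ i, hi⟩)

/-- The two summands of the leading letter are adjoint to each other, which accounts for the
factor `2`. -/
theorem trace_altProd_letters (hm : Even m) {X : Matrix n n R} (hX : X.IsSymm)
    (hdet : IsUnit X.det) {κ : I → R} (hd : ∀ i j, u i ⬝ᵥ f j = if i = j then 1 else 0)
    (hf : ∀ j, X *ᵥ f j = κ j • u j) (hf' : ∀ j, X *ᵥ f' j = κ j • p j) {g : Fin m → I}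
    (hg : Function.Injective g) {i₀ : I} (h₀ : i₀ ∉ Set.range g) :
    (altProd R _ (2 * m + 1) (wordLetter u p f f' ∘ Fin.cons (i₀, 1) (pairLetters g))).trace =
      2 * (2 * m + 1) * ∑ τ : Equiv.Perm (Fin m),
        chainWeight (fun i j => p i ⬝ᵥ f j) i₀ (i₀ :: List.ofFn (g ∘ τ)) := by
  have hparity : Even (2 * m * (2 * m - 1) / 2) := by
    rw [mul_assoc, Nat.mul_div_cancel_left _ two_pos]
    exact hm.mul_right _
  set P := altProd R _ (2 * m) (wordLetter u p f f' ∘ pairLetters g) with hP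
  have hself : IsAdjointPair X X P P :=
    isAdjointPair_altProd (fun a => isAdjointPair_wordLetter hX hf hf' (pairLetters g a)) hparity
  have hfirst : wordLetter u p f f' (i₀, 1) =
      vecMulVec (f i₀) (p i₀) + vecMulVec (f' i₀) (u i₀) := rfl
  rw [trace_altProd_succ_of_even (even_two_mul m), Function.comp_apply, Fin.cons_zero, hfirst,
    Matrix.add_mul, trace_add]
  change _ * (trace (_ * P) + trace (_ * P)) = _
  rw [trace_mul_eq_of_isAdjointPair hdet (isAdjointPair_vecMulVec hX (hf i₀) (hf' i₀)) hself,
    trace_vecMulVec_mul, hP, altProd_letters_mulVec hd hg h₀, dotProduct_sum]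
  simp only [dotProduct_smul, chainWeight, smul_eq_mul, mul_comm (chainWeight _ _ _)]
  push_cast
  ring

end LetterSums

/-! ### The wheel Gram matrix -/

section WheelGram

open Matrix

theorem cyc_bijective {g : ℕ} : Function.Bijective (cyc (g := g)) := by
  refine Finite.injective_iff_bijective.1 fun i j h => ?_
  have hmod : (i : ℕ) ≡ j [MOD g] := Nat.ModEq.add_right_cancel' 1 (congrArg Fin.val h)
  exact Fin.ext (hmod.eq_of_lt_of_lt i.2 j.2)

theorem cyc_castSucc {m : ℕ} (i : Fin m) : cyc i.castSucc = i.succ := by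
  ext
  simp [cyc, Nat.mod_eq_of_lt]

theorem cyc_last (m : ℕ) : cyc (Fin.last m) = 0 := by
  ext
  simp [cyc]

theorem sum_ite_cyc_eq {g : ℕ} {M : Type*} [AddCommMonoid M] (j : Fin g) (F : Fin g → M) :
    ∑ i, (if cyc i = j then F (cyc i) else 0) = F j := by
  rw [cyc_bijective.sum_comp fun i => if i = j then F i else 0]
  simp

variable {K : Type*} [Field K] {g m : ℕ}

/-- The vector `w j • e (j - 1) - e j`, with cyclic indices. -/
def wheelU (w : Fin g → K) (j i : Fin g) : K :=
  (if cyc i = j then w j else 0) - if i = j then 1 else 0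

/-- The vector `e (j - 1)`, with cyclic indices; it is the derivative of `wheelU w j` with respect
to `w j`. -/
def wheelP (j i : Fin g) : K := if cyc i = j then 1 else 0

/-- The matrix of pairings of the vectors `wheelP` with the dual basis of `wheelU`. -/
noncomputable def wheelN (w : Fin g → K) (i j : Fin g) : K :=
  -(1 - ∏ l, w l)⁻¹ * ((∏ l ∈ Finset.Iio i, w l) / ∏ l ∈ Finset.Iic j, w l) *
    if i ≤ j then ∏ l, w l else 1

/-- The dual basis of `wheelU`. -/
noncomputable def wheelF (w : Fin g → K) (j i : Fin g) : K := wheelN w (cyc i) j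

theorem wheelP_dotProduct_wheelF (w : Fin g → K) (i j : Fin g) :
    wheelP i ⬝ᵥ wheelF w j = wheelN w i j := by
  simp only [dotProduct, wheelP, wheelF, ite_mul, one_mul, zero_mul]
  exact sum_ite_cyc_eq i fun k => wheelN w k j

theorem mul_wheelN_castSucc_sub {w : Fin (m + 1) → K} (hw : ∀ i, w i ≠ 0) (hq : ∏ i, w i ≠ 1)
    (i : Fin m) (j : Fin (m + 1)) :
    w i.castSucc * wheelN w i.castSucc j - wheelN w i.succ j =
      if i.castSucc = j then 1 else 0 := by
  have hIio : ∏ l ∈ Finset.Iio i.succ, w l = (∏ l ∈ Finset.Iio i.castSucc, w l) * w i.castSucc := by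
    rw [Finset.prod_Iio_mul_eq_prod_Iic]
    rfl
  rw [wheelN, wheelN, hIio]
  rcases lt_trichotomy i.castSucc j with h | rfl | h
  · rw [if_pos h.le, if_neg h.ne, if_pos (Fin.castSucc_lt_iff_succ_le.1 h)]
    ring
  · have hprod : ∏ l ∈ Finset.Iio i.castSucc, w l ≠ 0 := Finset.prod_ne_zero_iff.2 fun l _ => hw l
    have hq' : 1 - ∏ l, w l ≠ 0 := sub_ne_zero.2 hq.symm
    have := hw i.castSucc
    rw [if_pos le_rfl, if_pos rfl, if_neg (Fin.castSucc_lt_succ).not_ge,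
      ← Finset.prod_Iio_mul_eq_prod_Iic]
    field_simp
    ring
  · rw [if_neg h.not_ge, if_neg h.ne',
      if_neg fun h' => h.not_gt (Fin.castSucc_lt_iff_succ_le.2 h')]
    ring

theorem prod_Iic_last {M : Type*} [CommMonoid M] (w : Fin (m + 1) → M) :
    ∏ l ∈ Finset.Iic (Fin.last m), w l = ∏ l, w l := by
  rw [← Fin.top_eq_last, Finset.Iic_top]

theorem mul_wheelN_last_sub {w : Fin (m + 1) → K} (hw : ∀ i, w i ≠ 0) (hq : ∏ i, w i ≠ 1)
    (j : Fin (m + 1)) :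
    w (Fin.last m) * wheelN w (Fin.last m) j - wheelN w 0 j = if Fin.last m = j then 1 else 0 := by
  have hIio : (∏ l ∈ Finset.Iio (Fin.last m), w l) * w (Fin.last m) = ∏ l, w l := by
    rw [Finset.prod_Iio_mul_eq_prod_Iic, prod_Iic_last]
  have hzero : ∏ l ∈ Finset.Iio (0 : Fin (m + 1)), w l = 1 := by
    rw [← bot_eq_zero (α := Fin (m + 1)), Finset.Iio_bot, Finset.prod_empty]
  have hprod : ∏ l, w l ≠ 0 := Finset.prod_ne_zero_iff.2 fun l _ => hw l
  have hq' : 1 - ∏ l, w l ≠ 0 := sub_ne_zero.2 hq.symm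
  rw [wheelN, wheelN, if_pos (Fin.zero_le j), hzero]
  by_cases hj : Fin.last m = j
  · subst hj
    rw [if_pos le_rfl, if_pos rfl, prod_Iic_last]
    field_simp
    linear_combination -hIio
  · rw [if_neg fun h => hj (Fin.last_le_iff.1 h).symm, if_neg hj]
    linear_combination -(1 - ∏ l, w l)⁻¹ * (∏ l ∈ Finset.Iic j, w l)⁻¹ * hIio

theorem wheelU_dotProduct_wheelF {w : Fin (m + 1) → K} (hw : ∀ i, w i ≠ 0) (hq : ∏ i, w i ≠ 1)
    (i j : Fin (m + 1)) : wheelU w i ⬝ᵥ wheelF w j = if i = j then 1 else 0 := by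
  have hrec : w i * wheelN w i j - wheelN w (cyc i) j = if i = j then 1 else 0 := by
    induction i using Fin.lastCases with
    | last => rw [cyc_last, mul_wheelN_last_sub hw hq]
    | cast i => rw [cyc_castSucc, mul_wheelN_castSucc_sub hw hq]
  rw [← hrec]
  simp only [dotProduct, wheelU, sub_mul, ite_mul, one_mul, zero_mul, Finset.sum_sub_distrib,
    Finset.sum_ite_eq', Finset.mem_univ, if_true, wheelF]
  rw [sum_ite_cyc_eq i fun k => w i * wheelN w k j]

/-- The Gram matrix `∑ j, κ j • u j (u j)ᵀ` of the vectors `u j = wheelU w j`. -/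
def wheelGram (w κ : Fin g → K) : Matrix (Fin g) (Fin g) K :=
  ∑ j, κ j • vecMulVec (wheelU w j) (wheelU w j)

theorem isSymm_wheelGram (w κ : Fin g → K) : (wheelGram w κ).IsSymm := by
  simp [IsSymm, wheelGram, transpose_sum, transpose_smul, transpose_vecMulVec]

theorem wheelGram_mulVec_wheelF {w : Fin (m + 1) → K} (hw : ∀ i, w i ≠ 0) (hq : ∏ i, w i ≠ 1)
    (κ : Fin (m + 1) → K) (j : Fin (m + 1)) :
    wheelGram w κ *ᵥ wheelF w j = κ j • wheelU w j := by
  simp only [wheelGram, sum_mulVec, smul_mulVec, vecMulVec_mulVec, wheelU_dotProduct_wheelF hw hq]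
  rw [Finset.sum_eq_single j (fun i _ hi => by simp [hi]) (by simp)]
  simp

theorem isUnit_det_wheelGram {w κ : Fin (m + 1) → K} (hw : ∀ i, w i ≠ 0) (hq : ∏ i, w i ≠ 1)
    (hκ : ∀ i, κ i ≠ 0) : IsUnit (wheelGram w κ).det := by
  have hdual : of (wheelU w) * (of (wheelF w))ᵀ = 1 := by
    ext i j
    rw [one_apply, ← wheelU_dotProduct_wheelF hw hq]
    rfl
  have hU : IsUnit (of (wheelU w)).det :=
    IsUnit.of_mul_eq_one ((of (wheelF w))ᵀ).det (by rw [← det_mul, hdual, det_one])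
  have hgram : wheelGram w κ = (of (wheelU w))ᵀ * diagonal κ * of (wheelU w) := by
    ext a b
    simp only [wheelGram, Matrix.sum_apply, Matrix.smul_apply, vecMulVec_apply,
      mul_apply (M := _ * _), mul_diagonal, transpose_apply, of_apply, smul_eq_mul]
    exact Finset.sum_congr rfl fun j _ => by ring
  rw [hgram, det_mul, det_mul, det_transpose, det_diagonal]
  exact (hU.mul (Finset.prod_ne_zero_iff.2 fun i _ => hκ i).isUnit).mul hU

theorem wheelN_of_ne {w : Fin g → K} {i j : Fin g} (h : i ≠ j) :
    wheelN w i j = -(1 - ∏ l, w l)⁻¹ * ((∏ l ∈ Finset.Iio i, w l) / ∏ l ∈ Finset.Iic j, w l) *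
      (∏ l, w l) ^ (if i < j then 1 else 0) := by
  rw [wheelN]
  congr 1
  rcases lt_or_gt_of_ne h with h | h
  · rw [if_pos h.le, if_pos h, pow_one]
  · rw [if_neg h.not_ge, if_neg h.not_gt, pow_zero]

/-- The quotients in `wheelN` telescope. -/
theorem chainWeight_wheelN {w : Fin g → K} (hw : ∀ i, w i ≠ 0) (i₀ : Fin g) (l : List (Fin g))
    (a : Fin g) (hl : (a :: l).Nodup) (h₀ : i₀ ∉ l) :
    chainWeight (wheelN w) i₀ (a :: l) = (-(1 - ∏ l, w l)⁻¹) ^ (l.length + 1) *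
      ((∏ l ∈ Finset.Iio a, w l) / ∏ l ∈ Finset.Iic i₀, w l) * (l.map w).prod⁻¹ *
        (∏ l, w l) ^ ascents (a :: l) *
        (if (a :: l).getLast (List.cons_ne_nil a l) ≤ i₀ then ∏ l, w l else 1) := by
  induction l generalizing a with
  | nil => by_cases h : a ≤ i₀ <;> simp [chainWeight, wheelN, ascents, h]
  | cons b l ih =>
    have hb : ∏ l ∈ Finset.Iio b, w l ≠ 0 := Finset.prod_ne_zero_iff.2 fun l _ => hw l
    have hwb := hw b
    rw [chainWeight, ih b hl.of_cons fun h => h₀ (List.mem_cons_of_mem b h), List.headD_cons,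
      wheelN_of_ne (List.ne_of_not_mem_cons (List.nodup_cons.1 hl).1),
      ← Finset.prod_Iio_mul_eq_prod_Iic (a := b)]
    simp only [List.length_cons, List.map_cons, ascents, List.prod_cons, List.getLast_cons_cons,
      pow_add]
    field_simp
    rfl

theorem prod_mul_chainWeight_wheelN_perm {w : Fin (m + 1) → K} (hw : ∀ i, w i ≠ 0)
    (τ : Equiv.Perm (Fin m)) :
    (∏ l, w l) * chainWeight (wheelN w) (Fin.last m)
        (Fin.last m :: List.ofFn (Fin.castSucc ∘ τ)) =
      (-1) ^ (m + 1) * ((∏ l, w l) ^ (1 + ascents (List.ofFn fun i => (τ i : ℕ))) /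
        (1 - ∏ l, w l) ^ (m + 1)) := by
  have hlast : Fin.last m ∉ List.ofFn (Fin.castSucc ∘ τ) := fun h => by
    obtain ⟨i, hi⟩ := List.mem_ofFn.1 h
    exact (Fin.castSucc_lt_last _).ne hi
  have hnodup : (Fin.last m :: List.ofFn (Fin.castSucc ∘ τ)).Nodup :=
    List.nodup_cons.2 ⟨hlast, List.nodup_ofFn.2 ((Fin.castSucc_injective m).comp τ.injective)⟩
  have hasc : ascents (Fin.last m :: List.ofFn (Fin.castSucc ∘ τ)) =
      ascents (List.ofFn fun i => (τ i : ℕ)) := by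
    rw [ascents_cons_of_le fun b _ => Fin.le_last b, ← ascents_map Fin.val_strictMono,
      List.map_ofFn]
    rfl
  have hprod : ((List.ofFn (Fin.castSucc ∘ τ)).map w).prod =
      ∏ l ∈ Finset.Iio (Fin.last m), w l := by
    rw [List.map_ofFn, List.prod_ofFn, Function.comp_def]
    simp only [Function.comp_apply]
    rw [Equiv.prod_comp τ fun i => w i.castSucc]
    refine mul_right_cancel₀ (hw (Fin.last m)) ?_
    rw [Finset.prod_Iio_mul_eq_prod_Iic, prod_Iic_last, Fin.prod_univ_castSucc]
  have hIio : ∏ l ∈ Finset.Iio (Fin.last m), w l ≠ 0 := Finset.prod_ne_zero_iff.2 fun l _ => hw l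
  have huniv : ∏ l, w l ≠ 0 := Finset.prod_ne_zero_iff.2 fun l _ => hw l
  rw [chainWeight_wheelN hw _ _ _ hnodup hlast, if_pos (Fin.le_last _), hasc, hprod, prod_Iic_last,
    List.length_ofFn, neg_pow, inv_pow, pow_add _ 1, pow_one]
  generalize (1 - ∏ l, w l) ^ (m + 1) = b
  field_simp

end WheelGram

/-! ### The canonical form in wheel directions -/

section CanonicalForm

open Matrix

variable {g N : ℕ}

theorem phiForm_eq_trace_altProd (X : Matrix (Fin g) (Fin g) ℝ)
    (V : Fin N → Matrix (Fin g) (Fin g) ℝ) :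
    phiForm N X V = (altProd ℝ _ N fun i => X⁻¹ * V i).trace := by
  rw [altProd_apply, trace_sum]
  refine Finset.sum_congr rfl fun σ _ => ?_
  rw [trace_smul, smul_eq_mul]
  rfl

/-- The form `phiForm N X` as an alternating map of the tangent vectors. -/
noncomputable def phiAlternating (N : ℕ) (X : Matrix (Fin g) (Fin g) ℝ) :
    Matrix (Fin g) (Fin g) ℝ [⋀^Fin N]→ₗ[ℝ] ℝ :=
  ((traceLinearMap (Fin g) ℝ ℝ).compAlternatingMap (altProd ℝ _ N)).compLinearMap
    (LinearMap.mulLeft ℝ X⁻¹)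

theorem phiAlternating_apply (X : Matrix (Fin g) (Fin g) ℝ)
    (V : Fin N → Matrix (Fin g) (Fin g) ℝ) : phiAlternating N X V = phiForm N X V :=
  (phiForm_eq_trace_altProd X V).symm

/-- The form descends to the projective space of matrices. -/
theorem phiForm_smul_add (hN : Odd N) (h1 : 1 < N) {X : Matrix (Fin g) (Fin g) ℝ}
    (hX : IsUnit X.det) {r : ℝ} (hr : r ≠ 0) (D : Fin N → Matrix (Fin g) (Fin g) ℝ)
    (c : Fin N → ℝ) : phiForm N (r • X) (fun i => r • D i + c i • X) = phiForm N X D := by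
  have hinv : (r • X)⁻¹ = r⁻¹ • X⁻¹ :=
    inv_eq_left_inv (by rw [smul_mul_smul_comm, inv_mul_cancel₀ hr, one_smul, nonsing_inv_mul _ hX])
  have harg (i : Fin N) :
      (r • X)⁻¹ * (r • D i + c i • X) = X⁻¹ * D i + (r⁻¹ * c i) • (1 : Matrix _ _ ℝ) := by
    rw [hinv, Matrix.mul_add, smul_mul_smul_comm, smul_mul_smul_comm, inv_mul_cancel₀ hr, one_smul,
      nonsing_inv_mul _ hX]
  simp only [phiForm_eq_trace_altProd, harg]
  exact trace_altProd_add_smul_one hN h1 _ _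

theorem exists_perm_comp_eq {α ι : Type*} [Finite α] {a b : α → ι} (hb : Function.Injective b)
    (hba : ∀ i, b i ∈ Set.range a) : ∃ σ : Equiv.Perm α, a ∘ σ = b := by
  choose σ hσ using hba
  have hinj : Function.Injective σ := fun i j hij => hb (by rw [← hσ i, hij, hσ j])
  exact ⟨Equiv.ofBijective σ (Finite.injective_iff_bijective.1 hinj), funext hσ⟩

theorem abs_alternatingMap_comp_eq {α ι V : Type*} [Finite α] [AddCommGroup V] [Module ℝ V]
    (T : V [⋀^α]→ₗ[ℝ] ℝ) (D : ι → V) {a b : α → ι} (hb : Function.Injective b)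
    (hba : ∀ i, b i ∈ Set.range a) : |T (D ∘ a)| = |T (D ∘ b)| := by
  classical
  have := Fintype.ofFinite α
  obtain ⟨σ, rfl⟩ := exists_perm_comp_eq hb hba
  rw [← Function.comp_assoc, T.map_perm]
  rcases Int.units_eq_one_or (Equiv.Perm.sign σ) with h | h <;> simp [h]

end CanonicalForm

section WheelDirections

open Matrix

variable {m : ℕ} {w κ : Fin (m + 1) → ℝ}

/-- Tangent directions at `wheelGram w κ`: `(j, 0)` scales the `j`-th rank one summand and `(j, 1)`
moves the vector `wheelU w j` by `-w j • wheelP j`. -/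
noncomputable def wheelDir {g : ℕ} (w κ : Fin g → ℝ) (a : Fin g × Fin 2) :
    Matrix (Fin g) (Fin g) ℝ :=
  if a.2 = 0 then κ a.1 • vecMulVec (wheelU w a.1) (wheelU w a.1)
  else -(κ a.1 * w a.1) • (vecMulVec (wheelP a.1) (wheelU w a.1) +
    vecMulVec (wheelU w a.1) (wheelP a.1))

/-- The preimage of `κ j • wheelP j` under the Gram matrix. -/
noncomputable def wheelQ {g : ℕ} (w κ : Fin g → ℝ) (j : Fin g) : Fin g → ℝ :=
  (wheelGram w κ)⁻¹ *ᵥ (κ j • wheelP j)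

theorem wheelGram_mulVec_wheelQ (hw : ∀ i, w i ≠ 0) (hκ : ∀ i, κ i ≠ 0) (hq : ∏ i, w i ≠ 1)
    (j : Fin (m + 1)) : wheelGram w κ *ᵥ wheelQ w κ j = κ j • wheelP j := by
  rw [wheelQ, mulVec_mulVec, mul_nonsing_inv _ (isUnit_det_wheelGram hw hq hκ), one_mulVec]

theorem inv_wheelGram_mul_wheelDir (hw : ∀ i, w i ≠ 0) (hκ : ∀ i, κ i ≠ 0) (hq : ∏ i, w i ≠ 1)
    (a : Fin (m + 1) × Fin 2) :
    (wheelGram w κ)⁻¹ * wheelDir w κ a = (if a.2 = 0 then 1 else -w a.1) •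
      wordLetter (wheelU w) wheelP (wheelF w) (wheelQ w κ) a := by
  suffices h : wheelDir w κ a = wheelGram w κ * ((if a.2 = 0 then 1 else -w a.1) •
      wordLetter (wheelU w) wheelP (wheelF w) (wheelQ w κ) a) by
    rw [h, nonsing_inv_mul_cancel_left _ _ (isUnit_det_wheelGram hw hq hκ)]
  unfold wheelDir wordLetter
  split_ifs
  · rw [one_smul, mul_vecMulVec, wheelGram_mulVec_wheelF hw hq, smul_vecMulVec]
  · rw [Matrix.mul_smul, Matrix.mul_add, mul_vecMulVec, mul_vecMulVec,
      wheelGram_mulVec_wheelF hw hq, wheelGram_mulVec_wheelQ hw hκ hq, smul_vecMulVec,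
      smul_vecMulVec, ← smul_add, smul_smul, add_comm (vecMulVec (wheelU w _) _), neg_mul,
      mul_comm (w _)]

/-- The enumeration `(m, 1), (0, 0), (0, 1), (1, 0), (1, 1), …, (m - 1, 1)` of the tangent
directions; `(m, 0)` is omitted because the last scale is normalised to `1`. -/
def dirIndex (m : ℕ) : Fin (2 * m + 1) → Fin (m + 1) × Fin 2 :=
  Fin.cons (Fin.last m, 1) (pairLetters Fin.castSucc)

theorem last_notMem_range_castSucc (m : ℕ) : Fin.last m ∉ Set.range (Fin.castSucc (n := m)) :=
  fun ⟨i, hi⟩ => (Fin.castSucc_lt_last i).ne hi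

theorem dirIndex_injective (m : ℕ) : Function.Injective (dirIndex m) :=
  Fin.cons_injective_iff.2 ⟨fun ⟨_, hi⟩ => last_notMem_range_castSucc m ⟨_, congrArg Prod.fst hi⟩,
    pairLetters_injective (Fin.castSucc_injective m)⟩

theorem dirIndex_ne_last_zero (m : ℕ) (i : Fin (2 * m + 1)) : dirIndex m i ≠ (Fin.last m, 0) := by
  induction i using Fin.cases with
  | zero => simp [dirIndex]
  | succ i => exact fun h => last_notMem_range_castSucc m ⟨_, congrArg Prod.fst h⟩

theorem prod_dirIndex (w : Fin (m + 1) → ℝ) :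
    ∏ i, (if (dirIndex m i).2 = 0 then 1 else -w (dirIndex m i).1) =
      (-1) ^ (m + 1) * ∏ i, w i := by
  rw [Fin.prod_univ_succ, ← Equiv.prod_comp (pairEquiv m), Fintype.prod_prod_type]
  simp only [dirIndex, Fin.cons_zero, Fin.cons_succ, pairLetters, Function.comp_apply,
    Equiv.symm_apply_apply, Prod.map, id, Fin.prod_univ_two, if_true, one_mul, one_ne_zero,
    if_false, Fin.prod_univ_castSucc (n := m), Finset.prod_neg, Finset.card_univ, Fintype.card_fin]
  ring

theorem phiForm_wheelDir (hm : Even m) (hw : ∀ i, w i ≠ 0) (hκ : ∀ i, κ i ≠ 0)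
    (hq : ∏ i, w i ≠ 1) :
    phiForm (2 * m + 1) (wheelGram w κ) (wheelDir w κ ∘ dirIndex m) =
      2 * (2 * m + 1) * ((∑ τ : Equiv.Perm (Fin m),
        (∏ i, w i) ^ (1 + ascents (List.ofFn fun i => (τ i : ℕ)))) /
          (1 - ∏ i, w i) ^ (m + 1)) := by
  set L := wordLetter (wheelU w) wheelP (wheelF w) (wheelQ w κ) with hL
  have hscale : phiForm (2 * m + 1) (wheelGram w κ) (wheelDir w κ ∘ dirIndex m) =
      (∏ i, if (dirIndex m i).2 = 0 then 1 else -w (dirIndex m i).1) *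
        (altProd ℝ _ (2 * m + 1) (L ∘ dirIndex m)).trace := by
    rw [phiForm_eq_trace_altProd, ← smul_eq_mul (∏ i, _), ← trace_smul]
    simp only [Function.comp_apply, inv_wheelGram_mul_wheelDir hw hκ hq]
    exact congrArg trace ((altProd ℝ _ (2 * m + 1)).toMultilinearMap.map_smul_univ _ _)
  have htrace := trace_altProd_letters hm (isSymm_wheelGram w κ) (isUnit_det_wheelGram hw hq hκ)
    (wheelU_dotProduct_wheelF hw hq) (wheelGram_mulVec_wheelF hw hq κ)
    (wheelGram_mulVec_wheelQ hw hκ hq) (Fin.castSucc_injective m) (last_notMem_range_castSucc m)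
  simp only [wheelP_dotProduct_wheelF] at htrace
  rw [← hL, ← dirIndex] at htrace
  rw [hscale, prod_dirIndex, htrace, mul_left_comm]
  congr 1
  rw [mul_assoc, Finset.mul_sum, Finset.mul_sum, Finset.sum_div]
  refine Finset.sum_congr rfl fun τ _ => ?_
  rw [prod_mul_chainWeight_wheelN_perm hw, ← mul_assoc, ← mul_pow, neg_one_mul, neg_neg, one_pow,
    one_mul]

theorem hasSum_phiForm_wheelDir (hm : Even m) (hw : ∀ i, w i ≠ 0) (hκ : ∀ i, κ i ≠ 0)
    (hq : |∏ i, w i| < 1) :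
    HasSum (fun n : ℕ => 2 * (2 * m + 1 : ℝ) * (((n : ℝ) + 1) ^ m * (∏ i, w i) ^ (n + 1)))
      (phiForm (2 * m + 1) (wheelGram w κ) (wheelDir w κ ∘ dirIndex m)) := by
  rw [phiForm_wheelDir hm hw hκ (abs_lt.1 hq).2.ne]
  exact (hasSum_succ_pow_mul_geometric m (Real.norm_eq_abs _ ▸ hq)).mul_left (2 * (2 * m + 1 : ℝ))

end WheelDirections

/-! ### The chart of the wheel cell -/

section WheelCoordinates

open Matrix

variable {m : ℕ}

/-- The space of lengths of the `m + 1` spokes and of all rim edges but the last one. -/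
abbrev WheelSpace (m : ℕ) : Type := (Fin (m + 1) → ℝ) × (Fin m → ℝ)

theorem wheelLap_add {g : ℕ} (x x' y y' : Fin g → ℝ) :
    wheelLap g (x + x') (y + y') = wheelLap g x y + wheelLap g x' y' := by
  ext i j
  simp only [wheelLap, of_apply, Matrix.add_apply, Pi.add_apply]
  split_ifs <;> ring

theorem wheelLap_smul {g : ℕ} (c : ℝ) (x y : Fin g → ℝ) :
    wheelLap g (c • x) (c • y) = c • wheelLap g x y := by
  ext i j
  simp only [wheelLap, of_apply, Matrix.smul_apply, Pi.smul_apply, smul_eq_mul]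
  split_ifs <;> ring

/-- Extension of a vector by a last coordinate `0`; the linear part of `extendOne`. -/
noncomputable def extendZero (m : ℕ) : (Fin m → ℝ) →ₗ[ℝ] (Fin (m + 1) → ℝ) :=
  Function.ExtendByZero.linearMap ℝ Fin.castSucc

theorem extendZero_castSucc (y : Fin m → ℝ) (i : Fin m) : extendZero m y i.castSucc = y i :=
  (Fin.castSucc_injective m).extend_apply y _ i

theorem extendZero_last (y : Fin m → ℝ) : extendZero m y (Fin.last m) = 0 :=
  Function.extend_apply' y _ _ (last_notMem_range_castSucc m)

theorem extendZero_single (i : Fin m) :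
    extendZero m (Pi.single i 1) = Pi.single i.castSucc 1 := by
  ext j
  induction j using Fin.lastCases with
  | last => simp [extendZero_last, (Fin.castSucc_lt_last i).ne']
  | cast j => simp [extendZero_castSucc, Pi.single_apply]

theorem extendOne_castSucc (y : Fin m → ℝ) (i : Fin m) :
    extendOne (m + 1) y i.castSucc = y i := by
  simp [extendOne]

theorem extendOne_last (y : Fin m → ℝ) : extendOne (m + 1) y (Fin.last m) = 1 := by
  simp [extendOne]

theorem extendOne_eq_extendZero_add (y : Fin m → ℝ) :
    extendOne (m + 1) y = extendZero m y + Pi.single (Fin.last m) 1 := by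
  ext i
  induction i using Fin.lastCases with
  | last => simp [extendOne_last, extendZero_last]
  | cast i => simp [extendOne_castSucc, extendZero_castSucc, (Fin.castSucc_lt_last i).ne]

/-- The linear part of the affine map sending edge lengths to the wheel Laplacian. -/
noncomputable def wheelLin (m : ℕ) :
    WheelSpace m →ₗ[ℝ] Matrix (Fin (m + 1)) (Fin (m + 1)) ℝ where
  toFun p := wheelLap (m + 1) p.1 (extendZero m p.2)
  map_add' p q := by rw [Prod.fst_add, Prod.snd_add, map_add, wheelLap_add]
  map_smul' c p := by rw [Prod.smul_fst, Prod.smul_snd, map_smul, wheelLap_smul, RingHom.id_apply]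

theorem wheelLin_apply (p : WheelSpace m) :
    wheelLin m p = wheelLap (m + 1) p.1 (extendZero m p.2) := rfl

theorem wheelLap_extendOne (p : WheelSpace m) :
    wheelLap (m + 1) p.1 (extendOne (m + 1) p.2) =
      wheelLin m p + wheelLap (m + 1) 0 (Pi.single (Fin.last m) 1) := by
  rw [wheelLin_apply, ← wheelLap_add, add_zero, extendOne_eq_extendZero_add]

/-- The enumeration of the coordinates: first the spokes, then the rim edges. -/
def coordEquiv (m : ℕ) : Fin (m + 1) ⊕ Fin m ≃ Fin (2 * m + 1) :=
  finSumFinEquiv.trans (finCongr (by ring))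

/-- The coordinate basis of `WheelSpace m`. -/
noncomputable def coordBasis (m : ℕ) : Module.Basis (Fin (2 * m + 1)) ℝ (WheelSpace m) :=
  ((Pi.basisFun ℝ (Fin (m + 1))).prod (Pi.basisFun ℝ (Fin m))).reindex (coordEquiv m)

theorem coordBasis_inl (i : Fin (m + 1)) :
    coordBasis m (coordEquiv m (Sum.inl i)) = (Pi.single i 1, 0) := by
  simp [coordBasis]

theorem coordBasis_inr (i : Fin m) :
    coordBasis m (coordEquiv m (Sum.inr i)) = (0, Pi.single i 1) := by
  simp [coordBasis]

theorem wheelLin_coordBasis (j : Fin (2 * m + 1)) :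
    wheelLin m (coordBasis m j) = wheelDeriv (m + 1) j := by
  obtain ⟨i | i, rfl⟩ := (coordEquiv m).surjective j
  · have hi : (coordEquiv m (Sum.inl i) : ℕ) = i := rfl
    rw [coordBasis_inl, wheelLin_apply, map_zero, wheelDeriv, dif_pos (by omega)]
    congr 1
    ext k
    simp [Pi.single_apply, Fin.ext_iff, hi]
  · have hi : (coordEquiv m (Sum.inr i) : ℕ) = m + 1 + i := rfl
    rw [coordBasis_inr, wheelLin_apply, extendZero_single, wheelDeriv, dif_neg (by omega)]
    congr 1
    ext k
    simp [Pi.single_apply, Fin.ext_iff, hi]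

theorem det_mul_phiForm_wheelDeriv (X : Matrix (Fin (m + 1)) (Fin (m + 1)) ℝ)
    (A : WheelSpace m →ₗ[ℝ] WheelSpace m) :
    LinearMap.det A * phiForm (2 * m + 1) X (wheelDeriv (m + 1)) =
      phiForm (2 * m + 1) X fun j => wheelLin m (A (coordBasis m j)) := by
  have hderiv : (wheelDeriv (m + 1) : Fin (2 * m + 1) → _) = fun j => wheelLin m (coordBasis m j) :=
    funext fun j => (wheelLin_coordBasis j).symm
  have hdet := Module.Basis.det_comp (coordBasis m) A (coordBasis m)
  rw [Module.Basis.det_self, mul_one] at hdet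
  have hsmul := congrArg (fun S => S (A ∘ coordBasis m)) (AlternatingMap.eq_smul_basis_det
    (coordBasis m) ((phiAlternating (2 * m + 1) X).compLinearMap (wheelLin m)))
  simp only [AlternatingMap.smul_apply, smul_eq_mul, hdet] at hsmul
  rw [hderiv, ← phiAlternating_apply, ← phiAlternating_apply, mul_comm]
  exact hsmul.symm

/-- The tangent direction of the chart in the `j`-th coordinate. -/
def slotIndex (m : ℕ) (j : Fin (2 * m + 1)) : Fin (m + 1) × Fin 2 :=
  Sum.elim (fun i => (i, 1)) (fun i => (i.castSucc, 0)) ((coordEquiv m).symm j)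

theorem mem_range_slotIndex {a : Fin (m + 1) × Fin 2} (ha : a ≠ (Fin.last m, 0)) :
    a ∈ Set.range (slotIndex m) := by
  obtain ⟨k, b⟩ := a
  match b with
  | 1 => exact ⟨coordEquiv m (Sum.inl k), by simp [slotIndex]⟩
  | 0 =>
    obtain ⟨i, rfl⟩ := Fin.exists_castSucc_eq.2 fun hk : k = Fin.last m => ha (by rw [hk])
    exact ⟨coordEquiv m (Sum.inr i), by simp [slotIndex]⟩

theorem abs_phiForm_slotIndex (X : Matrix (Fin (m + 1)) (Fin (m + 1)) ℝ)
    (D : Fin (m + 1) × Fin 2 → Matrix (Fin (m + 1)) (Fin (m + 1)) ℝ) :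
    |phiForm (2 * m + 1) X (D ∘ slotIndex m)| = |phiForm (2 * m + 1) X (D ∘ dirIndex m)| := by
  simp only [← phiAlternating_apply]
  exact abs_alternatingMap_comp_eq _ D (dirIndex_injective m) fun i =>
    mem_range_slotIndex (dirIndex_ne_last_zero m i)

end WheelCoordinates

section WheelGramLaplacian

open Matrix

variable {g : ℕ}

theorem cyc_cyc_ne (hg : 3 ≤ g) (i : Fin g) : cyc (cyc i) ≠ i := by
  intro h
  have hmod : ((i : ℕ) + 1 + 1) % g = i := by
    rw [← Nat.mod_add_mod]
    exact congrArg Fin.val h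
  rcases lt_or_ge ((i : ℕ) + 1 + 1) g with hlt | hge
  · rw [Nat.mod_eq_of_lt hlt] at hmod
    omega
  · rw [Nat.mod_eq_sub_mod hge, Nat.mod_eq_of_lt (by omega)] at hmod
    omega

theorem cyc_ne (hg : 3 ≤ g) (i : Fin g) : cyc i ≠ i :=
  fun h => cyc_cyc_ne hg i (by rw [h, h])

theorem wheelGram_apply (w κ : Fin g → ℝ) (a b : Fin g) :
    wheelGram w κ a b =
      (if b = a then κ (cyc a) * w (cyc a) * w (cyc a) else 0)
      - (if b = cyc a then κ (cyc a) * w (cyc a) else 0)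
      - (if cyc b = a then κ a * w a else 0) + if b = a then κ a else 0 := by
  have hterm (j : Fin g) : (κ j • vecMulVec (wheelU w j) (wheelU w j)) a b =
      (if cyc a = j then (if cyc b = j then κ j * w j * w j else 0) else 0)
      - (if cyc a = j then (if b = j then κ j * w j else 0) else 0)
      - (if a = j then (if cyc b = j then κ j * w j else 0) else 0)
      + (if a = j then (if b = j then κ j else 0) else 0) := by
    simp only [Matrix.smul_apply, vecMulVec_apply, wheelU, smul_eq_mul]
    split_ifs <;> ring
  simp only [wheelGram, Matrix.sum_apply, hterm, Finset.sum_add_distrib, Finset.sum_sub_distrib,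
    Finset.sum_ite_eq, Finset.mem_univ, if_true, cyc_bijective.injective.eq_iff]

theorem wheelGram_eq_wheelLap (hg : 3 ≤ g) (w κ : Fin g → ℝ) :
    wheelGram w κ = wheelLap g (fun i => κ i * w i) fun i =>
      κ i * (1 - w i) - κ (cyc i) * w (cyc i) * (1 - w (cyc i)) := by
  ext a b
  rw [wheelGram_apply]
  simp only [wheelLap, of_apply]
  by_cases hab : a = b
  · subst hab
    simp only [(cyc_ne hg a), (cyc_ne hg a).symm, if_true, if_false]
    ring
  · by_cases hba : b = cyc a
    · subst hba
      simp [hab, cyc_ne hg a, cyc_cyc_ne hg a]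
    · by_cases hcyc : a = cyc b
      · simp [← hcyc, hba, Ne.symm hab, hab]
      · simp [hab, Ne.symm hab, hba, hcyc, Ne.symm hcyc]

/-- The derivative of the Gram matrix when `w` and `κ` move with logarithmic velocities `-v` and
`k`. -/
noncomputable def gramDir (w κ v k : Fin g → ℝ) : Matrix (Fin g) (Fin g) ℝ :=
  ∑ j, (k j • wheelDir w κ (j, 0) + v j • wheelDir w κ (j, 1))

theorem hasDerivAt_wheelGram {w κ : ℝ → Fin g → ℝ} {v k : Fin g → ℝ} {t : ℝ}
    (hw : ∀ j, HasDerivAt (fun s => w s j) (-v j * w t j) t)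
    (hκ : ∀ j, HasDerivAt (fun s => κ s j) (k j * κ t j) t) (a b : Fin g) :
    HasDerivAt (fun s => wheelGram (w s) (κ s) a b) (gramDir (w t) (κ t) v k a b) t := by
  have hu (j i : Fin g) : HasDerivAt (fun s => wheelU (w s) j i) (-v j * w t j * wheelP j i) t := by
    unfold wheelU wheelP
    split_ifs
    · simpa using (hw j).sub_const 1
    · simpa using (hw j).sub_const 0
    · simpa using hasDerivAt_const t (0 - 1 : ℝ)
    · simpa using hasDerivAt_const t (0 - 0 : ℝ)
  simp only [wheelGram, Matrix.sum_apply, Matrix.smul_apply, vecMulVec_apply, smul_eq_mul]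
  refine (HasDerivAt.fun_sum fun j _ => (hκ j).mul ((hu j a).mul (hu j b))).congr_deriv ?_
  simp only [gramDir, Matrix.sum_apply, Matrix.add_apply, Matrix.smul_apply, wheelDir, if_true,
    one_ne_zero, if_false, vecMulVec_apply, smul_eq_mul, Pi.mul_apply]
  exact Finset.sum_congr rfl fun j _ => by ring

end WheelGramLaplacian

section WheelChart

open Matrix

variable {m : ℕ}

/-- The ratios `w i = exp (-v i)` of the parametrisation `(v, k) ↦ (w, κ)`. -/
noncomputable def chartW (p : WheelSpace m) (i : Fin (m + 1)) : ℝ :=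
  Real.exp (-p.1 i)

/-- The scales `κ i = exp (k i)` of the parametrisation `(v, k) ↦ (w, κ)`, the last one being
`1`. -/
noncomputable def chartK (p : WheelSpace m) (i : Fin (m + 1)) : ℝ :=
  Real.exp (extendZero m p.2 i)

/-- The rim lengths of the wheel with Laplacian `wheelGram (chartW p) (chartK p)`. -/
noncomputable def chartY (p : WheelSpace m) (i : Fin (m + 1)) : ℝ :=
  chartK p i * (1 - chartW p i) - chartK p (cyc i) * chartW p (cyc i) * (1 - chartW p (cyc i))

/-- The parametrisation of the wheel cell: the edge lengths of the wheel with Laplacian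
`wheelGram (chartW p) (chartK p)`, normalised so that the last rim edge has length `1`. -/
noncomputable def chart (p : WheelSpace m) : WheelSpace m :=
  (fun i => (chartY p (Fin.last m))⁻¹ * (chartK p i * chartW p i),
    fun j => (chartY p (Fin.last m))⁻¹ * chartY p j.castSucc)

/-- The domain of the parametrisation `chart`. -/
def chartDomain (m : ℕ) : Set (WheelSpace m) :=
  {p | (∀ i, 0 < p.1 i) ∧ ∀ i, 0 < chartY p i}

theorem chartW_pos (p : WheelSpace m) (i : Fin (m + 1)) : 0 < chartW p i := Real.exp_pos _

theorem chartK_pos (p : WheelSpace m) (i : Fin (m + 1)) : 0 < chartK p i := Real.exp_pos _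

theorem prod_chartW (p : WheelSpace m) : ∏ i, chartW p i = Real.exp (-∑ i, p.1 i) := by
  simp only [chartW, ← Real.exp_sum, Finset.sum_neg_distrib]

theorem abs_prod_chartW_lt_one {p : WheelSpace m} (hp : ∀ i, 0 < p.1 i) :
    |∏ i, chartW p i| < 1 := by
  rw [prod_chartW, Real.abs_exp, Real.exp_lt_one_iff, neg_lt_zero]
  exact Finset.sum_pos (fun i _ => hp i) ⟨0, Finset.mem_univ _⟩

theorem extendOne_chart {p : WheelSpace m} (hp : chartY p (Fin.last m) ≠ 0) (i : Fin (m + 1)) :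
    extendOne (m + 1) (chart p).2 i = (chartY p (Fin.last m))⁻¹ * chartY p i := by
  induction i using Fin.lastCases with
  | last => exact (extendOne_last _).trans (inv_mul_cancel₀ hp).symm
  | cast i => exact extendOne_castSucc _ i

theorem wheelLap_chart (hm : 2 ≤ m) {p : WheelSpace m} (hp : chartY p (Fin.last m) ≠ 0) :
    wheelLap (m + 1) (chart p).1 (extendOne (m + 1) (chart p).2) =
      (chartY p (Fin.last m))⁻¹ • wheelGram (chartW p) (chartK p) := by
  rw [wheelGram_eq_wheelLap (by omega), ← wheelLap_smul, funext (extendOne_chart hp)]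
  rfl

theorem differentiable_chartW (i : Fin (m + 1)) :
    Differentiable ℝ fun p : WheelSpace m => chartW p i := by
  unfold chartW
  fun_prop

theorem differentiable_chartK (i : Fin (m + 1)) :
    Differentiable ℝ fun p : WheelSpace m => chartK p i := by
  have hlin := (LinearMap.toContinuousLinearMap (LinearMap.proj i ∘ₗ extendZero m)).differentiable
  exact (hlin.comp differentiable_snd).exp

theorem differentiable_chartY (i : Fin (m + 1)) :
    Differentiable ℝ fun p : WheelSpace m => chartY p i := by
  have hw := differentiable_chartW (m := m)
  have hκ := differentiable_chartK (m := m)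
  unfold chartY
  fun_prop

theorem differentiableAt_chart {p : WheelSpace m} (hp : chartY p (Fin.last m) ≠ 0) :
    DifferentiableAt ℝ chart p := by
  have hw (i) := (differentiable_chartW (m := m) i).differentiableAt (x := p)
  have hκ (i) := (differentiable_chartK (m := m) i).differentiableAt (x := p)
  have hy (i) := (differentiable_chartY (m := m) i).differentiableAt (x := p)
  have hr := (hy (Fin.last m)).inv hp
  exact (differentiableAt_pi.2 fun i => hr.mul ((hκ i).mul (hw i))).prodMk
    (differentiableAt_pi.2 fun j => hr.mul (hy j.castSucc))

theorem isOpen_chartDomain (m : ℕ) : IsOpen (chartDomain m) := by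
  simp only [chartDomain, Set.ofPred_and, Set.ofPred_forall]
  exact (isOpen_iInter_of_finite fun i => isOpen_lt continuous_const (by fun_prop)).inter
    (isOpen_iInter_of_finite fun i =>
      isOpen_lt continuous_const (differentiable_chartY i).continuous)

theorem hasLineDerivAt_chartW (p e : WheelSpace m) (i : Fin (m + 1)) :
    HasLineDerivAt ℝ (fun q => chartW q i) (-e.1 i * chartW p i) p e := by
  have hexponent : HasDerivAt (fun t : ℝ => -(p.1 i + t * e.1 i)) (-e.1 i) 0 := by
    simpa only [one_mul, id] using
      (((hasDerivAt_id (0 : ℝ)).mul_const (e.1 i)).const_add (p.1 i)).fun_neg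
  exact hexponent.exp.congr_deriv (by simp [chartW, mul_comm])

theorem hasLineDerivAt_chartK (p e : WheelSpace m) (i : Fin (m + 1)) :
    HasLineDerivAt ℝ (fun q => chartK q i) (extendZero m e.2 i * chartK p i) p e := by
  have hexponent : HasDerivAt (fun t : ℝ => extendZero m (p + t • e).2 i)
      (extendZero m e.2 i) 0 := by
    simpa using ((hasDerivAt_id (0 : ℝ)).mul_const (extendZero m e.2 i)).const_add
      (extendZero m p.2 i)
  exact hexponent.exp.congr_deriv (by simp [chartK, mul_comm])

theorem hasLineDerivAt_wheelGram_chart (p e : WheelSpace m) (a b : Fin (m + 1)) :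
    HasLineDerivAt ℝ (fun q => wheelGram (chartW q) (chartK q) a b)
      (gramDir (chartW p) (chartK p) e.1 (extendZero m e.2) a b) p e := by
  have hzero : p + (0 : ℝ) • e = p := by rw [zero_smul, add_zero]
  have hline := hasDerivAt_wheelGram (t := 0) (w := fun t => chartW (p + t • e))
    (κ := fun t => chartK (p + t • e)) (v := e.1) (k := extendZero m e.2)
    (fun j => HasDerivAt.congr_deriv (hasLineDerivAt_chartW p e j) (by rw [hzero]))
    (fun j => HasDerivAt.congr_deriv (hasLineDerivAt_chartK p e j) (by rw [hzero])) a b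
  exact hline.congr_deriv (by rw [hzero])

theorem gramDir_coordBasis (w κ : Fin (m + 1) → ℝ) (j : Fin (2 * m + 1)) :
    gramDir w κ (coordBasis m j).1 (extendZero m (coordBasis m j).2) =
      wheelDir w κ (slotIndex m j) := by
  obtain ⟨i | i, rfl⟩ := (coordEquiv m).surjective j
  · simp [gramDir, coordBasis_inl, slotIndex, Pi.single_apply]
  · simp [gramDir, coordBasis_inr, slotIndex, extendZero_single, Pi.single_apply]

theorem wheelLin_fderiv_chart (hm : 2 ≤ m) {p : WheelSpace m} (hp : chartY p (Fin.last m) ≠ 0)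
    (e : WheelSpace m) :
    ∃ c : ℝ, wheelLin m (fderiv ℝ chart p e) =
      (chartY p (Fin.last m))⁻¹ • gramDir (chartW p) (chartK p) e.1 (extendZero m e.2) +
        c • wheelGram (chartW p) (chartK p) := by
  set r : WheelSpace m → ℝ := fun q => (chartY q (Fin.last m))⁻¹ with hr
  have hscale : HasLineDerivAt ℝ r (fderiv ℝ r p e) p e :=
    ((differentiable_chartY (Fin.last m)).differentiableAt.inv hp).hasFDerivAt.hasLineDerivAt e
  refine ⟨fderiv ℝ r p e, ?_⟩
  ext a b
  have hlin : HasLineDerivAt ℝ (fun q => wheelLin m (chart q) a b)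
      (wheelLin m (fderiv ℝ chart p e) a b) p e :=
    ((LinearMap.toContinuousLinearMap
      (entryLinearMap ℝ ℝ a b ∘ₗ wheelLin m)).hasFDerivAt.comp p
        (differentiableAt_chart hp).hasFDerivAt).hasLineDerivAt e
  have hgram : HasLineDerivAt ℝ (fun q => r q * wheelGram (chartW q) (chartK q) a b -
      wheelLap (m + 1) 0 (Pi.single (Fin.last m) 1) a b) _ p e :=
    (HasDerivAt.mul hscale (hasLineDerivAt_wheelGram_chart p e a b)).sub_const _
  have hlap : (fun q => wheelLin m (chart q) a b) =ᶠ[nhds p] fun q =>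
      r q * wheelGram (chartW q) (chartK q) a b -
        wheelLap (m + 1) 0 (Pi.single (Fin.last m) 1) a b := by
    filter_upwards [(differentiable_chartY (Fin.last m)).continuous.continuousAt.eventually_ne hp]
      with q hq
    have hentry := congrArg (fun X => X a b) (wheelLap_chart hm hq)
    simp only [wheelLap_extendOne, Matrix.add_apply, Matrix.smul_apply, smul_eq_mul] at hentry
    exact eq_sub_of_add_eq hentry
  rw [hlin.unique (hgram.congr_of_eventuallyEq hlap)]
  simp only [zero_smul, add_zero, Matrix.add_apply, Matrix.smul_apply, smul_eq_mul, hr]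
  ring

theorem wheelCanonicalIntegrand_succ (p : WheelSpace m) :
    wheelCanonicalIntegrand (m + 1) p = phiForm (2 * m + 1)
      (wheelLap (m + 1) p.1 (extendOne (m + 1) p.2)) (wheelDeriv (m + 1)) := rfl

theorem det_mul_wheelCanonicalIntegrand (hm : 2 ≤ m) {p : WheelSpace m} (hp : p ∈ chartDomain m) :
    (fderiv ℝ chart p).det * wheelCanonicalIntegrand (m + 1) (chart p) =
      phiForm (2 * m + 1) (wheelGram (chartW p) (chartK p))
        (wheelDir (chartW p) (chartK p) ∘ slotIndex m) := by
  have hy := (hp.2 (Fin.last m)).ne'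
  have hdet : IsUnit (wheelGram (chartW p) (chartK p)).det :=
    isUnit_det_wheelGram (fun i => (chartW_pos p i).ne')
      (abs_lt.1 (abs_prod_chartW_lt_one hp.1)).2.ne fun i => (chartK_pos p i).ne'
  choose c hc using wheelLin_fderiv_chart hm hy
  have hform := det_mul_phiForm_wheelDeriv ((chartY p (Fin.last m))⁻¹ •
    wheelGram (chartW p) (chartK p)) (fderiv ℝ chart p).toLinearMap
  simp only [ContinuousLinearMap.coe_coe, hc, gramDir_coordBasis] at hform
  rw [phiForm_smul_add ⟨m, rfl⟩ (by omega) hdet (inv_ne_zero hy)] at hform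
  rw [wheelCanonicalIntegrand_succ, wheelLap_chart hm hy]
  exact hform

theorem hasSum_abs_det_mul_abs (hm : Even m) (hm2 : 2 ≤ m) {p : WheelSpace m}
    (hp : p ∈ chartDomain m) :
    HasSum (fun n : ℕ => 2 * (2 * m + 1 : ℝ) *
        (((n : ℝ) + 1) ^ m * Real.exp (-(((n : ℝ) + 1) * ∑ i, p.1 i))))
      (|(fderiv ℝ chart p).det| * |wheelCanonicalIntegrand (m + 1) (chart p)|) := by
  have hpow (n : ℕ) : (∏ i, chartW p i) ^ (n + 1) = Real.exp (-((n + 1) * ∑ i, p.1 i)) := by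
    rw [prod_chartW, ← Real.exp_nat_mul, Nat.cast_succ, mul_neg]
  have hsum := hasSum_phiForm_wheelDir hm (fun i => (chartW_pos p i).ne')
    (fun i => (chartK_pos p i).ne') (abs_prod_chartW_lt_one hp.1)
  simp only [hpow] at hsum
  rwa [← abs_mul, det_mul_wheelCanonicalIntegrand hm2 hp, abs_phiForm_slotIndex,
    abs_of_nonneg (hsum.nonneg fun n => by positivity)]

end WheelChart

/-! ### Inversion of the chart -/

section ParallelSum

/-- The parallel sum of two positive numbers, i.e. the resistance of two resistors in parallel. -/
noncomputable def parallelSum (a b : ℝ) : ℝ := a * b / (a + b)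

theorem parallelSum_nonneg {a b : ℝ} (ha : 0 < a) (hb : 0 < b) : 0 ≤ parallelSum a b :=
  div_nonneg (mul_nonneg ha.le hb.le) (add_pos ha hb).le

theorem parallelSum_le_left {a b : ℝ} (ha : 0 < a) (hb : 0 < b) : parallelSum a b ≤ a := by
  rw [parallelSum, div_le_iff₀ (add_pos ha hb)]
  nlinarith

theorem parallelSum_sub_parallelSum {a b c : ℝ} (ha : 0 < a) (hb : 0 < b) (hc : 0 < c) :
    parallelSum a b - parallelSum a c = a ^ 2 / ((a + b) * (a + c)) * (b - c) := by
  unfold parallelSum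
  field_simp
  ring

theorem parallelSum_mono_right {a b c : ℝ} (ha : 0 < a) (hb : 0 < b) (hbc : b ≤ c) :
    parallelSum a b ≤ parallelSum a c := by
  have hc : 0 < c := hb.trans_le hbc
  rw [← sub_nonneg, parallelSum_sub_parallelSum ha hc hb]
  exact mul_nonneg (by positivity) (sub_nonneg.2 hbc)

theorem abs_parallelSum_sub_lt {a b c : ℝ} (ha : 0 < a) (hb : 0 < b) (hc : 0 < c) (hbc : b ≠ c) :
    |parallelSum a b - parallelSum a c| < |b - c| := by
  have hlt : a ^ 2 / ((a + b) * (a + c)) < 1 := by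
    rw [div_lt_one (by positivity)]
    nlinarith [mul_pos ha hb, mul_pos ha hc, mul_pos hb hc]
  rw [parallelSum_sub_parallelSum ha hb hc, abs_mul, abs_of_nonneg (by positivity)]
  exact mul_lt_of_lt_one_left (abs_pos.2 (sub_ne_zero.2 hbc)) hlt

end ParallelSum

section Ladder

variable {ι : Type*} {c : ι → ι} {x y U V : ι → ℝ}

/-- The equations satisfied by the resistances `U i` of a ladder network in which `U i` is a
resistor `y i` in series with the parallel connection of `x (c i)` and `U (c i)`. -/
def IsLadder (c : ι → ι) (x y U : ι → ℝ) : Prop :=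
  ∀ i, U i = y i + parallelSum (x (c i)) (U (c i))

theorem exists_isLadder (c : ι → ι) (hx : ∀ i, 0 < x i) (hy : ∀ i, 0 < y i) :
    ∃ U, (∀ i, 0 < U i) ∧ IsLadder c x y U := by
  have : Fact (y ≤ fun i => y i + x (c i)) := ⟨fun i => le_add_of_nonneg_right (hx _).le⟩
  let box := Set.Icc y fun i => y i + x (c i)
  have hpos (U : box) (i : ι) : 0 < U.1 i := (hy i).trans_le (U.2.1 i)
  let step : box →o box :=
    { toFun U := ⟨fun i => y i + parallelSum (x (c i)) (U.1 (c i)),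
        fun i => le_add_of_nonneg_right (parallelSum_nonneg (hx _) (hpos U _)),
        fun i => add_le_add_right (parallelSum_le_left (hx _) (hpos U _)) _⟩
      monotone' U V hUV i := add_le_add_right
        (parallelSum_mono_right (hx _) (hpos U _) (hUV (c i))) _ }
  exact ⟨step.lfp.1, hpos _, fun i => (congrFun (congrArg Subtype.val step.map_lfp) i).symm⟩

theorem IsLadder.unique [Finite ι] (hx : ∀ i, 0 < x i) (hU : ∀ i, 0 < U i) (hV : ∀ i, 0 < V i)
    (hladderU : IsLadder c x y U) (hladderV : IsLadder c x y V) : U = V := by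
  by_contra hne
  obtain ⟨k, hk⟩ := Function.ne_iff.1 hne
  have : Nonempty ι := ⟨k⟩
  obtain ⟨i, hi⟩ := Finite.exists_max fun i => |U i - V i|
  have hstep : U i - V i = parallelSum (x (c i)) (U (c i)) - parallelSum (x (c i)) (V (c i)) := by
    rw [hladderU i, hladderV i, add_sub_add_left_eq_sub]
  by_cases hci : U (c i) = V (c i)
  · rw [hci, sub_self] at hstep
    exact (abs_pos.2 (sub_ne_zero.2 hk)).not_ge ((hi k).trans_eq (by rw [hstep, abs_zero]))
  · exact (hi (c i)).not_gt (hstep ▸ abs_parallelSum_sub_lt (hx _) (hU _) (hV _) hci)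

end Ladder

section ChartInverse

variable {m : ℕ}

/-- The cell of the wheel in the coordinates of `WheelSpace`. -/
def wheelCell (m : ℕ) : Set (WheelSpace m) := {p | (∀ i, 0 < p.1 i) ∧ ∀ j, 0 < p.2 j}

/-- The ladder resistances belonging to the edge lengths `chart p`. -/
noncomputable def chartU (p : WheelSpace m) (i : Fin (m + 1)) : ℝ :=
  (chartY p (Fin.last m))⁻¹ * (chartK p i * (1 - chartW p i))

/-- The parameters of the wheel with spokes `x` and ladder resistances `U`. -/
noncomputable def chartInv (x U : Fin (m + 1) → ℝ) : WheelSpace m :=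
  (fun i => -Real.log (x i / (x i + U i)),
    fun j => Real.log ((x j.castSucc + U j.castSucc) / (x (Fin.last m) + U (Fin.last m))))

theorem chart_mem_wheelCell {p : WheelSpace m} (hp : p ∈ chartDomain m) :
    chart p ∈ wheelCell m := by
  have hr := inv_pos.2 (hp.2 (Fin.last m))
  exact ⟨fun i => mul_pos hr (mul_pos (chartK_pos p i) (chartW_pos p i)),
    fun j => mul_pos hr (hp.2 j.castSucc)⟩

theorem chartU_pos {p : WheelSpace m} (hp : p ∈ chartDomain m) (i : Fin (m + 1)) :
    0 < chartU p i :=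
  mul_pos (inv_pos.2 (hp.2 (Fin.last m))) (mul_pos (chartK_pos p i)
    (sub_pos.2 (Real.exp_lt_one_iff.2 (neg_lt_zero.2 (hp.1 i)))))

theorem chart_fst_add_chartU (p : WheelSpace m) (i : Fin (m + 1)) :
    (chart p).1 i + chartU p i = (chartY p (Fin.last m))⁻¹ * chartK p i := by
  simp only [chart, chartU]
  ring

theorem isLadder_chartU {p : WheelSpace m} (hp : p ∈ chartDomain m) :
    IsLadder cyc (chart p).1 (extendOne (m + 1) (chart p).2) (chartU p) := by
  intro i
  have hy := (hp.2 (Fin.last m)).ne'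
  have hκ := (chartK_pos p (cyc i)).ne'
  rw [parallelSum, chart_fst_add_chartU, extendOne_chart hy, chartU, chartU, chart]
  generalize chartY p (Fin.last m) = r at hy
  rw [chartY]
  field_simp [hκ]
  ring

theorem chartInv_chart {p : WheelSpace m} (hp : p ∈ chartDomain m) :
    chartInv (chart p).1 (chartU p) = p := by
  have hr := inv_ne_zero (hp.2 (Fin.last m)).ne'
  have hκlast : chartK p (Fin.last m) = 1 := by rw [chartK, extendZero_last, Real.exp_zero]
  refine Prod.ext (funext fun i => ?_) (funext fun j => ?_)
  · have hw : (chart p).1 i / ((chart p).1 i + chartU p i) = chartW p i := by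
      rw [chart_fst_add_chartU, chart, mul_div_mul_left _ _ hr,
        mul_div_cancel_left₀ _ (chartK_pos p i).ne']
    simp only [chartInv, hw, chartW, Real.log_exp, neg_neg]
  · simp only [chartInv, chart_fst_add_chartU, hκlast, mul_one, mul_div_cancel_left₀ _ hr]
    rw [chartK, Real.log_exp, extendZero_castSucc]

theorem injOn_chart (m : ℕ) : Set.InjOn chart (chartDomain m) := by
  intro p hp q hq hpq
  have hU : chartU p = chartU q :=
    (isLadder_chartU hp).unique (chart_mem_wheelCell hp).1 (chartU_pos hp) (chartU_pos hq)
      (hpq ▸ isLadder_chartU hq)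
  rw [← chartInv_chart hp, ← chartInv_chart hq, hpq, hU]

variable {x U : Fin (m + 1) → ℝ}

theorem chartW_chartInv (hx : ∀ i, 0 < x i) (hU : ∀ i, 0 < U i) (i : Fin (m + 1)) :
    chartW (chartInv x U) i = x i / (x i + U i) := by
  simp only [chartW, chartInv, neg_neg, Real.exp_log (div_pos (hx i) (add_pos (hx i) (hU i)))]

theorem chartK_chartInv (hx : ∀ i, 0 < x i) (hU : ∀ i, 0 < U i) (i : Fin (m + 1)) :
    chartK (chartInv x U) i = (x i + U i) / (x (Fin.last m) + U (Fin.last m)) := by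
  have hxU (i) : 0 < x i + U i := add_pos (hx i) (hU i)
  induction i using Fin.lastCases with
  | last => rw [chartK, extendZero_last, Real.exp_zero, div_self (hxU _).ne']
  | cast j =>
    rw [chartK, extendZero_castSucc]
    exact Real.exp_log (div_pos (hxU _) (hxU _))

theorem chartY_chartInv {y : Fin (m + 1) → ℝ} (hx : ∀ i, 0 < x i) (hU : ∀ i, 0 < U i)
    (hladder : IsLadder cyc x y U) (i : Fin (m + 1)) :
    chartY (chartInv x U) i = y i / (x (Fin.last m) + U (Fin.last m)) := by
  have hxU (i) : x i + U i ≠ 0 := (add_pos (hx i) (hU i)).ne'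
  have hi := hxU i
  have hcyc := hxU (cyc i)
  have hlast := hxU (Fin.last m)
  rw [eq_sub_of_add_eq (hladder i).symm, parallelSum, chartY]
  simp only [chartW_chartInv hx hU, chartK_chartInv hx hU]
  field_simp
  ring

theorem chartInv_mem_chartDomain {y : Fin (m + 1) → ℝ} (hx : ∀ i, 0 < x i) (hy : ∀ i, 0 < y i)
    (hU : ∀ i, 0 < U i) (hladder : IsLadder cyc x y U) : chartInv x U ∈ chartDomain m := by
  have hxU (i) : 0 < x i + U i := add_pos (hx i) (hU i)
  refine ⟨fun i => neg_pos.2 (Real.log_neg (div_pos (hx i) (hxU i)) ?_), fun i => ?_⟩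
  · exact (div_lt_one (hxU i)).2 (lt_add_of_pos_right _ (hU i))
  · rw [chartY_chartInv hx hU hladder]
    exact div_pos (hy i) (hxU _)

theorem chart_chartInv {y : Fin m → ℝ} (hx : ∀ i, 0 < x i) (hU : ∀ i, 0 < U i)
    (hladder : IsLadder cyc x (extendOne (m + 1) y) U) : chart (chartInv x U) = (x, y) := by
  have hxU (i) : x i + U i ≠ 0 := (add_pos (hx i) (hU i)).ne'
  have hr : (chartY (chartInv x U) (Fin.last m))⁻¹ = x (Fin.last m) + U (Fin.last m) := by
    rw [chartY_chartInv hx hU hladder, extendOne_last, one_div, inv_inv]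
  refine Prod.ext (funext fun i => ?_) (funext fun j => ?_)
  · have hi := hxU i
    have hlast := hxU (Fin.last m)
    simp only [chart, hr, chartW_chartInv hx hU, chartK_chartInv hx hU]
    field_simp
  · simp only [chart, hr]
    rw [chartY_chartInv hx hU hladder, extendOne_castSucc, mul_div_cancel₀ _ (hxU (Fin.last m))]

theorem image_chart (m : ℕ) : chart '' chartDomain m = wheelCell m := by
  refine Set.Subset.antisymm (Set.image_subset_iff.2 fun p hp => chart_mem_wheelCell hp) ?_
  rintro ⟨x, y⟩ ⟨hx, hy⟩
  have hy' (i) : 0 < extendOne (m + 1) y i := by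
    induction i using Fin.lastCases with
    | last => exact one_pos.trans_eq (extendOne_last y).symm
    | cast j => exact (hy j).trans_eq (extendOne_castSucc y j).symm
  obtain ⟨U, hU, hladder⟩ := exists_isLadder cyc hx hy'
  exact ⟨chartInv x U, chartInv_mem_chartDomain hx hy' hU hladder, chart_chartInv hx hU hladder⟩

end ChartInverse

/-! ### Integration over the chart domain -/

section Slicing

theorem lintegral_pi_fin_succ {n : ℕ} (μ : Fin (n + 1) → Measure ℝ) [∀ i, SigmaFinite (μ i)]
    {F : (Fin (n + 1) → ℝ) → ENNReal} (hF : Measurable F) :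
    ∫⁻ v, F v ∂Measure.pi μ =
      ∫⁻ t, ∫⁻ v, F (Fin.cons t v) ∂Measure.pi (fun i => μ i.succ) ∂μ 0 := by
  have h := (measurePreserving_piFinSuccAbove μ 0).symm
  rw [h.lintegral_map_equiv, lintegral_prod]
  · simp [MeasurableEquiv.piFinSuccAbove, Fin.insertNthEquiv]
  · exact (hF.comp (MeasurableEquiv.measurable _)).aemeasurable

theorem volume_fin_succ {n : ℕ} {s : Set (Fin (n + 1) → ℝ)} (hs : MeasurableSet s) :
    volume s = ∫⁻ t : ℝ, volume {v : Fin n → ℝ | Fin.cons t v ∈ s} := by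
  have hcons (t : ℝ) : Measurable fun v : Fin n → ℝ => (Fin.cons t v : Fin (n + 1) → ℝ) := by
    fun_prop
  rw [← lintegral_indicator_one hs, volume_pi,
    lintegral_pi_fin_succ _ (measurable_one.indicator hs)]
  exact lintegral_congr fun t => lintegral_indicator_one (hcons t hs)

theorem setLIntegral_prod_comp_fst {α β : Type*} [MeasurableSpace α] [MeasurableSpace β]
    {μ : Measure α} {ν : Measure β} [SFinite ν] {D : Set (α × β)} (hD : MeasurableSet D)
    {G : α → ENNReal} (hG : Measurable G) :
    ∫⁻ p in D, G p.1 ∂μ.prod ν = ∫⁻ a, G a * ν (Prod.mk a ⁻¹' D) ∂μ := by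
  rw [← lintegral_indicator hD,
    lintegral_prod _ (Measurable.indicator (by fun_prop) hD).aemeasurable]
  refine lintegral_congr fun a => ?_
  exact lintegral_indicator_const (measurable_prodMk_left hD) (G a)

end Slicing

section TruncatedPowers

/-- The truncated divided power `x₊ⁿ / n!`, with value `0` at `x ≤ 0` also for `n = 0`. -/
noncomputable def truncPow (n : ℕ) : ℝ → ENNReal :=
  (Set.Ioi 0).indicator fun x => ENNReal.ofReal (x ^ n / n.factorial)

theorem measurable_truncPow (n : ℕ) : Measurable (truncPow n) :=
  Measurable.indicator (by fun_prop) measurableSet_Ioi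

theorem setLIntegral_Iio_truncPow (n : ℕ) (d : ℝ) :
    ∫⁻ t in Set.Iio d, truncPow n t = truncPow (n + 1) d := by
  rw [truncPow, setLIntegral_indicator measurableSet_Ioi, Set.Ioi_inter_Iio]
  rcases le_or_gt d 0 with hd | hd
  · simp [truncPow, hd]
  have hval : ∫ t in Set.Ioo 0 d, t ^ n / (n.factorial : ℝ) =
      d ^ (n + 1) / (n + 1).factorial := by
    rw [← integral_Ioc_eq_integral_Ioo, ← intervalIntegral.integral_of_le hd.le,
      intervalIntegral.integral_div, integral_pow, zero_pow n.succ_ne_zero, sub_zero, div_div,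
      Nat.factorial_succ, Nat.cast_mul, Nat.cast_succ]
  have hint : IntegrableOn (fun t : ℝ => t ^ n / (n.factorial : ℝ)) (Set.Ioo 0 d) :=
    (Continuous.integrableOn_Icc (by fun_prop)).mono_set Set.Ioo_subset_Icc_self
  have hnonneg : ∀ t ∈ Set.Ioo 0 d, 0 ≤ t ^ n / (n.factorial : ℝ) := fun t ht => by
    have := ht.1
    positivity
  rw [← ofReal_integral_eq_lintegral_ofReal hint
      ((ae_restrict_mem measurableSet_Ioo).mono hnonneg), hval, truncPow,
    Set.indicator_of_mem (Set.mem_Ioi.2 hd)]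

theorem setLIntegral_Iio_truncPow_add (n : ℕ) (d s : ℝ) :
    ∫⁻ t in Set.Iio d, truncPow n (t + s) = truncPow (n + 1) (d + s) := by
  rw [← setLIntegral_Iio_truncPow, ← lintegral_indicator measurableSet_Iio,
    ← lintegral_indicator measurableSet_Iio,
    ← lintegral_add_right_eq_self ((Set.Iio (d + s)).indicator (truncPow n)) s]
  simp only [Set.indicator, Set.mem_Iio, add_lt_add_iff_right]

theorem setLIntegral_Ioi_truncPow_sub (n : ℕ) (u : ℝ) :
    ∫⁻ t in Set.Ioi 0, truncPow n (u - t) = truncPow (n + 1) u := by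
  rw [← setLIntegral_Iio_truncPow, ← lintegral_indicator measurableSet_Ioi,
    ← lintegral_indicator measurableSet_Iio,
    ← lintegral_sub_left_eq_self ((Set.Iio u).indicator (truncPow n)) u]
  simp only [Set.indicator, Set.mem_Iio, Set.mem_Ioi, sub_lt_self_iff]

theorem setLIntegral_Ioi_lintegral_truncPow_mul (n : ℕ) {F : ℝ → ENNReal} (hF : Measurable F) :
    ∫⁻ t in Set.Ioi 0, ∫⁻ s, truncPow n s * F (t + s) = ∫⁻ u, truncPow (n + 1) u * F u := by
  have hm := measurable_truncPow n
  have hshift (t : ℝ) :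
      ∫⁻ s, truncPow n s * F (t + s) = ∫⁻ u, truncPow n (u - t) * F u := by
    rw [← lintegral_sub_right_eq_self _ t]
    simp only [add_sub_cancel]
  simp only [hshift]
  rw [lintegral_lintegral_swap (by fun_prop)]
  refine lintegral_congr fun u => ?_
  rw [lintegral_mul_const _ (by fun_prop), setLIntegral_Ioi_truncPow_sub]

theorem lintegral_pi_Ioi_sum (n : ℕ) {F : ℝ → ENNReal} (hF : Measurable F) :
    ∫⁻ v, F (∑ i, v i) ∂Measure.pi (fun _ : Fin (n + 1) => volume.restrict (Set.Ioi 0)) =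
      ∫⁻ s, truncPow n s * F s := by
  induction n generalizing F with
  | zero =>
    rw [lintegral_pi_fin_succ _ (by fun_prop), ← lintegral_indicator measurableSet_Ioi]
    refine lintegral_congr fun t => ?_
    simp [Set.indicator, truncPow]
  | succ n ih =>
    rw [lintegral_pi_fin_succ _ (by fun_prop)]
    simp only [Fin.sum_univ_succ (n := n + 1), Fin.cons_zero, Fin.cons_succ]
    have hinner (t : ℝ) := ih (F := fun s => F (t + s)) (by fun_prop)
    rw [lintegral_congr hinner, setLIntegral_Ioi_lintegral_truncPow_mul n hF]

theorem lintegral_truncPow_mul_exp (m : ℕ) {c : ℝ} (hc : 0 < c) :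
    ∫⁻ s, truncPow m s * (truncPow m s * ENNReal.ofReal (Real.exp (-(c * s)))) =
      ENNReal.ofReal ((2 * m).factorial / ((m.factorial : ℝ) ^ 2 * c ^ (2 * m + 1))) := by
  set f : ℝ → ℝ := fun s => ((m.factorial : ℝ) ^ 2)⁻¹ *
    (s ^ (((2 * m : ℕ) + 1 : ℝ) - 1) * Real.exp (-(c * s))) with hf
  have hfun (s : ℝ) : truncPow m s * (truncPow m s * ENNReal.ofReal (Real.exp (-(c * s)))) =
      (Set.Ioi 0).indicator (fun s => ENNReal.ofReal (f s)) s := by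
    rcases le_or_gt s 0 with hs | hs
    · simp [truncPow, hs]
    simp only [truncPow, Set.indicator_of_mem (Set.mem_Ioi.2 hs)]
    rw [← ENNReal.ofReal_mul (by positivity), ← ENNReal.ofReal_mul (by positivity)]
    simp only [hf, add_sub_cancel_right, Real.rpow_natCast]
    congr 1
    field_simp
    ring
  have hval : ∫ s in Set.Ioi 0, f s =
      (2 * m).factorial / ((m.factorial : ℝ) ^ 2 * c ^ (2 * m + 1)) := by
    rw [integral_const_mul, Real.integral_rpow_mul_exp_neg_mul_Ioi (by positivity) hc,
      Real.Gamma_nat_eq_factorial, ← Nat.cast_succ, Real.rpow_natCast, one_div, inv_pow]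
    field_simp
  have hint : IntegrableOn f (Set.Ioi 0) :=
    Integrable.of_integral_ne_zero (by rw [hval]; positivity)
  have hnonneg : ∀ s ∈ Set.Ioi (0 : ℝ), 0 ≤ f s := fun s hs => by
    have : 0 < s := hs
    positivity
  simp only [hfun]
  rw [lintegral_indicator measurableSet_Ioi, ← hval,
    ofReal_integral_eq_lintegral_ofReal hint ((ae_restrict_mem measurableSet_Ioi).mono hnonneg)]

end TruncatedPowers

section CyclicChain

variable {n : ℕ}

/-- The simplex of all `k` with `k (i + 1) < k i + d i` for every index `i` modulo `n + 1`, the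
last coordinate of `k` being `0`. -/
def cyclicChain (d : Fin (n + 1) → ℝ) : Set (Fin n → ℝ) :=
  {k | ∀ i, extendZero n k (cyc i) < extendZero n k i + d i}

theorem measurableSet_cyclicChain (d : Fin (n + 1) → ℝ) : MeasurableSet (cyclicChain d) := by
  have hmeas (i : Fin (n + 1)) : Measurable fun k => extendZero n k i :=
    (LinearMap.continuous_of_finiteDimensional (LinearMap.proj i ∘ₗ extendZero n)).measurable
  exact measurableSet_setOfPred.2 <| Measurable.forall fun i =>
    measurableSet_setOfPred.1 (measurableSet_lt (hmeas _) ((hmeas i).add_const _))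

theorem extendZero_cons (t : ℝ) (k : Fin n → ℝ) :
    extendZero (n + 1) (Fin.cons t k) = Fin.cons t (extendZero n k) := by
  ext i
  induction i using Fin.lastCases with
  | last => rw [extendZero_last, ← Fin.succ_last, Fin.cons_succ, extendZero_last]
  | cast i =>
    rw [extendZero_castSucc]
    cases i using Fin.cases with
    | zero => rfl
    | succ i => rw [Fin.cons_succ, ← Fin.succ_castSucc, Fin.cons_succ, extendZero_castSucc]

theorem cons_mem_cyclicChain {d : Fin (n + 2) → ℝ} {t : ℝ} {k : Fin n → ℝ} :
    Fin.cons t k ∈ cyclicChain d ↔ t < d (Fin.last (n + 1)) ∧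
      k ∈ cyclicChain (Fin.snoc (fun j => d j.succ.castSucc) (t + d 0)) := by
  simp only [cyclicChain, Set.mem_ofPred_eq, extendZero_cons]
  rw [Fin.forall_fin_succ', Fin.forall_fin_succ, Fin.forall_fin_succ' (n := n)]
  simp only [cyc_castSucc, cyc_last, Fin.castSucc_zero]
  simp only [← Fin.succ_castSucc, ← Fin.succ_last, Fin.cons_succ, Fin.cons_zero,
    Fin.snoc_castSucc, Fin.snoc_last, extendZero_last, zero_add]
  tauto

theorem volume_cyclicChain (d : Fin (n + 1) → ℝ) :
    volume (cyclicChain d) = truncPow n (∑ i, d i) := by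
  induction n with
  | zero =>
    have hzero (k : Fin 0 → ℝ) (i : Fin 1) : extendZero 0 k i = 0 := by
      rw [Subsingleton.elim i (Fin.last 0), extendZero_last]
    by_cases hd : 0 < d 0 <;> simp [cyclicChain, truncPow, volume_pi, hd, hzero]
  | succ n ih =>
    have hsum : ∑ i, d i =
        d (Fin.last (n + 1)) + (d 0 + ∑ j : Fin n, d j.succ.castSucc) := by
      rw [Fin.sum_univ_castSucc, Fin.sum_univ_succ, Fin.castSucc_zero, add_comm]
    rw [volume_fin_succ (measurableSet_cyclicChain d), hsum, ← setLIntegral_Iio_truncPow_add,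
      ← lintegral_indicator measurableSet_Iio]
    refine lintegral_congr fun t => ?_
    simp only [cons_mem_cyclicChain]
    by_cases ht : t < d (Fin.last (n + 1))
    · simp only [ht, true_and, Set.ofPred_mem_eq, ih]
      rw [Set.indicator_of_mem (Set.mem_Iio.2 ht), Fin.sum_univ_castSucc]
      simp only [Fin.snoc_castSucc, Fin.snoc_last]
      congr 1
      ring
    · simp [ht]

end CyclicChain

section ChartDomain

variable {m : ℕ}

/-- The increments of the chain of inequalities that cuts out the fibre of `chartDomain` over `v`:
solving `0 < chartY (v, k) i` for `k (i + 1)`. -/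
noncomputable def chartGap (v : Fin (m + 1) → ℝ) (i : Fin (m + 1)) : ℝ :=
  Real.log (1 - Real.exp (-v i)) + v (cyc i) - Real.log (1 - Real.exp (-v (cyc i)))

theorem sum_chartGap (v : Fin (m + 1) → ℝ) : ∑ i, chartGap v i = ∑ i, v i := by
  simp only [chartGap, Finset.sum_sub_distrib, Finset.sum_add_distrib]
  rw [cyc_bijective.sum_comp v,
    cyc_bijective.sum_comp fun i => Real.log (1 - Real.exp (-v i))]
  ring

theorem chartY_pos_iff {v : Fin (m + 1) → ℝ} (hv : ∀ i, 0 < v i) (k : Fin m → ℝ)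
    (i : Fin (m + 1)) :
    0 < chartY (v, k) i ↔ extendZero m k (cyc i) < extendZero m k i + chartGap v i := by
  have hpos (i) : 0 < 1 - Real.exp (-v i) := by
    rw [sub_pos, Real.exp_lt_one_iff]
    exact neg_lt_zero.2 (hv i)
  have hi := hpos i
  have hci := hpos (cyc i)
  simp only [chartY, sub_pos, chartK, chartW]
  rw [← Real.log_lt_log_iff (by positivity) (by positivity), Real.log_mul (by positivity) hci.ne',
    Real.log_mul (by positivity) hi.ne', ← Real.exp_add, Real.log_exp, Real.log_exp, chartGap]
  constructor <;> intro h <;> linarith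

theorem preimage_chartDomain {v : Fin (m + 1) → ℝ} (hv : ∀ i, 0 < v i) :
    Prod.mk v ⁻¹' chartDomain m = cyclicChain (chartGap v) := by
  ext k
  simp only [chartDomain, cyclicChain, Set.mem_preimage, Set.mem_ofPred_eq, chartY_pos_iff hv, hv,
    implies_true, true_and]

theorem setLIntegral_chartDomain (m : ℕ) {G : ℝ → ENNReal} (hG : Measurable G) :
    ∫⁻ p in chartDomain m, G (∑ i, p.1 i) = ∫⁻ s, truncPow m s * (truncPow m s * G s) := by
  have hm := measurable_truncPow m
  have hfibre (v : Fin (m + 1) → ℝ) :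
      G (∑ i, v i) * volume (Prod.mk v ⁻¹' chartDomain m) =
        (Set.univ.pi fun _ => Set.Ioi 0).indicator
          (fun v => truncPow m (∑ i, v i) * G (∑ i, v i)) v := by
    by_cases hv : ∀ i, 0 < v i
    · rw [Set.indicator_of_mem (by simpa using hv), preimage_chartDomain hv, volume_cyclicChain,
        sum_chartGap, mul_comm]
    · have hempty : Prod.mk v ⁻¹' chartDomain m = ∅ :=
        Set.eq_empty_of_forall_notMem fun k hk => hv hk.1
      rw [Set.indicator_of_notMem (by simpa using hv), hempty, measure_empty, mul_zero]
  rw [Measure.volume_eq_prod, setLIntegral_prod_comp_fst (isOpen_chartDomain m).measurableSet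
    (G := fun v => G (∑ i, v i)) (by fun_prop), lintegral_congr hfibre,
    lintegral_indicator (MeasurableSet.univ_pi fun _ => measurableSet_Ioi), volume_pi,
    Measure.restrict_pi_pi]
  exact lintegral_pi_Ioi_sum m (F := fun s => truncPow m s * G s) (by fun_prop)

end ChartDomain

/-! ### Nonvanishing and the value of the integral -/

section Continuity

theorem continuousOn_phiForm {α : Type*} [TopologicalSpace α] {g n : ℕ} {s : Set α}
    {X : α → Matrix (Fin g) (Fin g) ℝ} (hX : Continuous X) (hdet : ∀ a ∈ s, (X a).det ≠ 0)
    (V : Fin n → Matrix (Fin g) (Fin g) ℝ) : ContinuousOn (fun a => phiForm n (X a) V) s := by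
  have hinv : ContinuousOn (fun a => (X a)⁻¹) s := fun a ha => by
    have hring : ContinuousAt Ring.inverse (X a).det := by
      rw [Ring.inverse_eq_inv']
      exact continuousAt_inv₀ (hdet a ha)
    exact ((continuousAt_matrix_inv _ hring).comp hX.continuousAt).continuousWithinAt
  refine continuousOn_finsetSum _ fun σ _ => continuousOn_const.mul ?_
  simp only [List.ofFn_eq_map]
  exact continuous_id.matrix_trace.comp_continuousOn
    (continuousOn_list_prod _ fun i _ => hinv.mul continuousOn_const)

theorem continuous_wheelLap_extendOne (g : ℕ) :
    Continuous fun p : (Fin g → ℝ) × (Fin (g - 1) → ℝ) => wheelLap g p.1 (extendOne g p.2) := by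
  refine continuous_matrix fun i j => ?_
  simp only [wheelLap, Matrix.of_apply, extendOne]
  split_ifs <;> fun_prop

theorem abs_setIntegral_eq_of_ne_zero {E : Type*} [TopologicalSpace E] [MeasurableSpace E]
    {μ : Measure E} {s : Set E} {f : E → ℝ} (hs : MeasurableSet s) (hc : IsPreconnected s)
    (hf : ContinuousOn f s) (h0 : ∀ x ∈ s, f x ≠ 0) :
    |∫ x in s, f x ∂μ| = ∫ x in s, ‖f x‖ ∂μ := by
  have hnonneg : 0 ≤ ∫ x in s, ‖f x‖ ∂μ := integral_nonneg fun x => norm_nonneg _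
  have hsq : Set.EqOn (f ^ 2) ((fun x => ‖f x‖) ^ 2) s := fun x _ => (sq_abs (f x)).symm
  rcases hc.eq_or_eq_neg_of_sq_eq hf hf.norm hsq fun hx => norm_ne_zero_iff.2 (h0 _ hx) with h | h
  · rw [setIntegral_congr_fun hs h, abs_of_nonneg hnonneg]
  · rw [setIntegral_congr_fun hs h]
    simp only [Pi.neg_apply]
    rw [integral_neg, abs_neg, abs_of_nonneg hnonneg]

end Continuity

section WheelIntegral

variable {m : ℕ}

theorem wheelCell_eq_prod (m : ℕ) : wheelCell m =
    (Set.univ.pi fun _ => Set.Ioi 0) ×ˢ (Set.univ.pi fun _ => Set.Ioi 0) := by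
  ext p
  simp [wheelCell]

theorem measurableSet_wheelCell (m : ℕ) : MeasurableSet (wheelCell m) := by
  rw [wheelCell_eq_prod]
  exact (MeasurableSet.univ_pi fun _ => measurableSet_Ioi).prod
    (MeasurableSet.univ_pi fun _ => measurableSet_Ioi)

theorem isPreconnected_wheelCell (m : ℕ) : IsPreconnected (wheelCell m) := by
  rw [wheelCell_eq_prod]
  exact (isPreconnected_univ_pi fun _ => isPreconnected_Ioi).prod
    (isPreconnected_univ_pi fun _ => isPreconnected_Ioi)

theorem det_wheelLap_ne_zero (hm : 2 ≤ m) {p : WheelSpace m} (hp : p ∈ wheelCell m) :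
    (wheelLap (m + 1) p.1 (extendOne (m + 1) p.2)).det ≠ 0 := by
  rw [← image_chart] at hp
  obtain ⟨q, hq, rfl⟩ := hp
  have hρ := (hq.2 (Fin.last m)).ne'
  rw [wheelLap_chart hm hρ, Matrix.det_smul]
  have hprod := (le_abs_self _).trans_lt (abs_prod_chartW_lt_one hq.1)
  have hunit := isUnit_det_wheelGram (fun i => (chartW_pos q i).ne') hprod.ne
    fun i => (chartK_pos q i).ne'
  exact mul_ne_zero (pow_ne_zero _ (inv_ne_zero hρ)) hunit.ne_zero

theorem continuousOn_wheelCanonicalIntegrand (hm : 2 ≤ m) :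
    ContinuousOn (wheelCanonicalIntegrand (m + 1)) (wheelCell m) :=
  continuousOn_phiForm (continuous_wheelLap_extendOne (m + 1))
    (fun _ hp => det_wheelLap_ne_zero hm hp) _

theorem wheelCanonicalIntegrand_ne_zero (hm : Even m) (hm2 : 2 ≤ m) {p : WheelSpace m}
    (hp : p ∈ wheelCell m) : wheelCanonicalIntegrand (m + 1) p ≠ 0 := by
  rw [← image_chart] at hp
  obtain ⟨q, hq, rfl⟩ := hp
  have hsum := hasSum_abs_det_mul_abs hm hm2 hq
  have hpos := hsum.summable.tsum_pos (fun n => by positivity) 0 (by positivity)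
  rw [hsum.tsum_eq] at hpos
  exact abs_pos.1 (pos_of_mul_pos_right hpos (abs_nonneg _))

theorem ofReal_abs_det_mul_enorm (hm : Even m) (hm2 : 2 ≤ m) {p : WheelSpace m}
    (hp : p ∈ chartDomain m) :
    ENNReal.ofReal |(fderiv ℝ chart p).det| * ‖wheelCanonicalIntegrand (m + 1) (chart p)‖ₑ =
      ∑' n : ℕ, ENNReal.ofReal (2 * (2 * m + 1) * (n + 1) ^ m) *
        ENNReal.ofReal (Real.exp (-((n + 1) * ∑ i, p.1 i))) := by
  have hsum := hasSum_abs_det_mul_abs hm hm2 hp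
  rw [Real.enorm_eq_ofReal_abs, ← ENNReal.ofReal_mul (abs_nonneg _), ← hsum.tsum_eq,
    ENNReal.ofReal_tsum_of_nonneg (fun n => by positivity) hsum.summable]
  refine tsum_congr fun n => ?_
  rw [← ENNReal.ofReal_mul (by positivity), ← mul_assoc]

theorem lintegral_enorm_wheelCanonicalIntegrand_eq_tsum (hm : Even m) (hm2 : 2 ≤ m) :
    ∫⁻ p in wheelCell m, ‖wheelCanonicalIntegrand (m + 1) p‖ₑ =
      ∑' n : ℕ, ENNReal.ofReal (2 * (2 * m + 1) * (n + 1) ^ m *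
        ((2 * m).factorial / ((m.factorial : ℝ) ^ 2 * (n + 1) ^ (2 * m + 1)))) := by
  have hD := (isOpen_chartDomain m).measurableSet
  have hderiv : ∀ p ∈ chartDomain m,
      HasFDerivWithinAt chart (fderiv ℝ chart p) (chartDomain m) p := fun p hp =>
    (differentiableAt_chart (hp.2 _).ne').hasFDerivAt.hasFDerivWithinAt
  have hvol : (volume : Measure (WheelSpace m)).IsAddHaarMeasure :=
    Measure.prod.instIsAddHaarMeasure _ _
  rw [← image_chart,
    lintegral_image_eq_lintegral_abs_det_fderiv_mul volume hD hderiv (injOn_chart m),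
    setLIntegral_congr_fun hD fun p hp => ofReal_abs_det_mul_enorm hm hm2 hp,
    lintegral_tsum fun n => by fun_prop]
  refine tsum_congr fun n => ?_
  rw [lintegral_const_mul _ (by fun_prop), setLIntegral_chartDomain m
      (G := fun s => ENNReal.ofReal (Real.exp (-((n + 1) * s)))) (by fun_prop),
    lintegral_truncPow_mul_exp m (by positivity), ← ENNReal.ofReal_mul (by positivity)]

theorem factorial_div_eq_mul_choose (m n : ℕ) :
    2 * (2 * m + 1 : ℝ) * ((n : ℝ) + 1) ^ m *
      ((2 * m).factorial / ((m.factorial : ℝ) ^ 2 * ((n : ℝ) + 1) ^ (2 * m + 1))) =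
    ((m + 1 : ℕ) : ℝ) * (Nat.choose (2 * (m + 1)) (m + 1) : ℝ) *
      (1 / ((n : ℝ) + 1) ^ (m + 1)) := by
  have hsucc : ((m : ℝ) + 1) * (Nat.choose (2 * (m + 1)) (m + 1) : ℝ) =
      2 * (2 * m + 1) * (Nat.choose (2 * m) m : ℝ) := by
    exact_mod_cast Nat.succ_mul_centralBinom_succ m
  have hfact : (Nat.choose (2 * m) m : ℝ) * (m.factorial : ℝ) ^ 2 = (2 * m).factorial := by
    rw [two_mul, ← Nat.add_choose_mul_factorial_mul_factorial m m]
    push_cast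
    ring
  push_cast
  rw [hsucc, ← hfact]
  field_simp
  ring

theorem lintegral_enorm_wheelCanonicalIntegrand (hm : Even m) (hm2 : 2 ≤ m) :
    ∫⁻ p in wheelCell m, ‖wheelCanonicalIntegrand (m + 1) p‖ₑ =
      ENNReal.ofReal (((m + 1 : ℕ) : ℝ) * (Nat.choose (2 * (m + 1)) (m + 1) : ℝ) *
        ∑' n : ℕ, 1 / ((n : ℝ) + 1) ^ (m + 1)) := by
  have hzeta : Summable fun n : ℕ => 1 / ((n : ℝ) + 1) ^ (m + 1) := by
    have h := Real.summable_one_div_nat_pow.2 (by omega : 1 < m + 1)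
    exact_mod_cast (summable_nat_add_iff 1).2 h
  rw [lintegral_enorm_wheelCanonicalIntegrand_eq_tsum hm hm2, ← tsum_mul_left,
    ENNReal.ofReal_tsum_of_nonneg (fun n => by positivity) (hzeta.mul_left _)]
  simp only [factorial_div_eq_mul_choose]

end WheelIntegral

/-- The canonical integral of `ω^{2g−1}` over the cell of the wheel `W_g` is
finite and equals `g · binomial(2g, g) · ζ(g)` up to orientation sign. -/
theorem wheel_canonicalIntegral (g : ℕ) (hg : 3 ≤ g) (hodd : Odd g) :
    IntegrableOn (wheelCanonicalIntegrand g)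
      {p | (∀ i, 0 < p.1 i) ∧ ∀ j, 0 < p.2 j} ∧
    |∫ p in {p : (Fin g → ℝ) × (Fin (g - 1) → ℝ) |
        (∀ i, 0 < p.1 i) ∧ ∀ j, 0 < p.2 j},
        wheelCanonicalIntegrand g p| =
      (g : ℝ) * (Nat.choose (2 * g) g : ℝ) *
        ∑' n : ℕ, 1 / ((n : ℝ) + 1) ^ g := by
  obtain ⟨m, rfl⟩ : ∃ m, g = m + 1 := ⟨g - 1, by omega⟩
  have hm : Even m := by simpa [parity_simps] using hodd
  have hm2 : 2 ≤ m := by omega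
  have hcell := measurableSet_wheelCell m
  have hcont := continuousOn_wheelCanonicalIntegrand hm2
  have hmeas := hcont.aestronglyMeasurable (μ := volume) hcell
  have hlint := lintegral_enorm_wheelCanonicalIntegrand hm hm2
  refine ⟨⟨hmeas, hlint.trans_lt ENNReal.ofReal_lt_top⟩, ?_⟩
  calc |∫ p in wheelCell m, wheelCanonicalIntegrand (m + 1) p|
      = ∫ p in wheelCell m, ‖wheelCanonicalIntegrand (m + 1) p‖ :=
        abs_setIntegral_eq_of_ne_zero hcell (isPreconnected_wheelCell m) hcont
          fun p hp => wheelCanonicalIntegrand_ne_zero hm hm2 hp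
    _ = (∫⁻ p in wheelCell m, ‖wheelCanonicalIntegrand (m + 1) p‖ₑ).toReal :=
        integral_norm_eq_lintegral_enorm hmeas
    _ = _ := by
        rw [hlint, ENNReal.toReal_ofReal (mul_nonneg (by positivity)
          (tsum_nonneg fun n => by positivity))]
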